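/- arXiv:1512.09236 — 7 statements merged into one kernel-verified Lean document; each statement's English description precedes it below -/
import Mathlib

section
/- Let G be the complete graph on an even number n ≥ 4 of vertices with nonnegative edge weights w. Let opt be the maximum weight of a Hamiltonian cycle of G, let C_max be a maximum-weight cycle cover of G, and let M be a maximum-weight perfect matching of G. Then 2·w(C_max) + w(M) ≥ (5/2)·opt; that is, the multigraph consisting of two copies of C_max and one copy of M has total edge weight at least (5/2)·opt. -/
/-!
The edge set `H` of a Hamiltonian cycle is itself a cycle cover, so `w(H) ≤ w(C)`. Since `n` is
even, the edges of `H` in even position and those in odd position are two perfect matchings which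
together make up `H`, so `w(H) ≤ 2 w(M)`. Adding twice the first inequality to half the second gives
`(5/2) w(H) ≤ 2 w(C) + w(M)`.

The combinatorics is done for an enumeration `g 0, …, g (n - 1)` of the vertices with `g n = g 0`;
the edges of the cycle are `s(g i, g (i + 1))` for `i < n`, and everything follows from the
description in `mem_cycEdge_iff` of the edges through the vertex `g j`.
-/

/-- A set of edges is a perfect matching if its edges are loopless and every
vertex lies on exactly one of them. -/
def IsPerfectMatchingEdges {V : Type*} (M : Finset (Sym2 V)) : Prop :=
  (∀ e ∈ M, ¬ e.IsDiag) ∧ ∀ v : V, ∃! e, e ∈ M ∧ v ∈ e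

/-- A set of edges is a cycle cover if its edges are loopless and every vertex
lies on exactly two of them (equivalently, it is a vertex-disjoint union of
simple cycles, each of length at least 3, covering all vertices). -/
def IsCycleCoverEdges {V : Type*} (C : Finset (Sym2 V)) : Prop :=
  (∀ e ∈ C, ¬ e.IsDiag) ∧ ∀ v : V, ({e : Sym2 V | e ∈ C ∧ v ∈ e}).ncard = 2

/-- The `i`-th edge of the closed walk visiting the vertices `g 0, g 1, …`. -/
def cycEdge {V : Type*} (g : ℕ → V) (i : ℕ) : Sym2 V := s(g i, g (i + 1))

section Enumeration

variable {V : Type*} {n : ℕ} {g : ℕ → V}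

/-- The edges through `g j` are those in positions `j` and `j - 1`, read cyclically. -/
lemma mem_cycEdge_iff (hn : 3 ≤ n) (hclosed : g n = g 0)
    (hinj : ∀ i < n, ∀ j < n, g i = g j → i = j) {i j : ℕ} (hi : i < n) (hj : j < n) :
    g j ∈ cycEdge g i ↔ j = i ∨ j = i + 1 ∨ (j = 0 ∧ i + 1 = n) := by
  rw [cycEdge, Sym2.mem_iff]
  constructor
  · rintro (h | h)
    · exact Or.inl (hinj _ hj _ hi h)
    · by_cases hin : i + 1 = n
      · rw [hin, hclosed] at h
        exact Or.inr (Or.inr ⟨hinj _ hj _ (by omega) h, hin⟩)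
      · exact Or.inr (Or.inl (hinj _ hj _ (by omega) h))
  · rintro (rfl | rfl | ⟨rfl, h⟩)
    · exact Or.inl rfl
    · exact Or.inr rfl
    · rw [h, hclosed]
      exact Or.inr rfl

lemma cycEdge_injOn (hn : 3 ≤ n) (hclosed : g n = g 0)
    (hinj : ∀ i < n, ∀ j < n, g i = g j → i = j) {i j : ℕ} (hi : i < n) (hj : j < n)
    (h : cycEdge g i = cycEdge g j) : i = j := by
  have key := fun k (hk : k < n) => mem_cycEdge_iff hn hclosed hinj hi hk
  have key' := fun k (hk : k < n) => mem_cycEdge_iff hn hclosed hinj hj hk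
  have h1 := (key' i hi).1 (h ▸ (key i hi).2 (Or.inl rfl))
  have h2 := (key j hj).1 (h ▸ (key' j hj).2 (Or.inl rfl))
  omega

lemma cycEdge_not_isDiag (hn : 3 ≤ n) (hclosed : g n = g 0)
    (hinj : ∀ i < n, ∀ j < n, g i = g j → i = j) {i : ℕ} (hi : i < n) :
    ¬ (cycEdge g i).IsDiag := by
  rw [cycEdge, Sym2.mk_isDiag_iff]
  intro h
  by_cases hin : i + 1 = n
  · rw [hin, hclosed] at h
    have := hinj _ hi _ (by omega) h
    omega
  · have := hinj _ hi _ (by omega) h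
    omega

lemma isCycleCoverEdges_cycEdge [DecidableEq V] (hn : 3 ≤ n) (hclosed : g n = g 0)
    (hinj : ∀ i < n, ∀ j < n, g i = g j → i = j) (hsurj : ∀ v, ∃ i < n, g i = v) :
    IsCycleCoverEdges ((Finset.range n).image (cycEdge g)) := by
  refine ⟨fun e he => ?_, fun v => ?_⟩
  · obtain ⟨i, hi, rfl⟩ := Finset.mem_image.1 he
    exact cycEdge_not_isDiag hn hclosed hinj (Finset.mem_range.1 hi)
  · obtain ⟨j, hj, rfl⟩ := hsurj v
    -- `k` is the cyclic predecessor of `j`.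
    obtain ⟨k, hk, hkj⟩ : ∃ k < n, (k + 1 = j ∨ (j = 0 ∧ k + 1 = n)) := by
      rcases Nat.eq_zero_or_pos j with h | h
      · exact ⟨n - 1, by omega, by omega⟩
      · exact ⟨j - 1, by omega, by omega⟩
    have hset : {e : Sym2 V | e ∈ (Finset.range n).image (cycEdge g) ∧ g j ∈ e} =
        {cycEdge g j, cycEdge g k} := by
      ext e
      simp only [Set.mem_ofPred_eq, Finset.mem_image, Finset.mem_range, Set.mem_insert_iff,
        Set.mem_singleton_iff]
      constructor
      · rintro ⟨⟨i, hi, rfl⟩, hmem⟩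
        rw [mem_cycEdge_iff hn hclosed hinj hi hj] at hmem
        have : i = j ∨ i = k := by omega
        rcases this with rfl | rfl <;> simp
      · rintro (rfl | rfl)
        · exact ⟨⟨j, hj, rfl⟩, (mem_cycEdge_iff hn hclosed hinj hj hj).2 (Or.inl rfl)⟩
        · exact ⟨⟨k, hk, rfl⟩, (mem_cycEdge_iff hn hclosed hinj hk hj).2 (by omega)⟩
    rw [hset]
    refine Set.ncard_pair fun h => ?_
    have := cycEdge_injOn hn hclosed hinj hj hk h
    omega

/-- On an even cycle, the edges whose positions have a given parity form a perfect matching. -/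
lemma isPerfectMatchingEdges_cycEdge [DecidableEq V] (hn : 3 ≤ n) (heven : Even n)
    (hclosed : g n = g 0) (hinj : ∀ i < n, ∀ j < n, g i = g j → i = j)
    (hsurj : ∀ v, ∃ i < n, g i = v) {b : ℕ} (hb : b < 2) :
    IsPerfectMatchingEdges (((Finset.range n).filter (· % 2 = b)).image (cycEdge g)) := by
  have hn2 : n % 2 = 0 := Nat.even_iff.1 heven
  refine ⟨fun e he => ?_, fun v => ?_⟩
  · obtain ⟨i, hi, rfl⟩ := Finset.mem_image.1 he
    exact cycEdge_not_isDiag hn hclosed hinj (Finset.mem_range.1 (Finset.mem_filter.1 hi).1)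
  · obtain ⟨j, hj, rfl⟩ := hsurj v
    -- Of the two positions of edges through `g j`, exactly one has parity `b`.
    obtain ⟨k, hk, hkb, hkj⟩ :
        ∃ k < n, k % 2 = b ∧ (j = k ∨ j = k + 1 ∨ (j = 0 ∧ k + 1 = n)) := by
      by_cases h : j % 2 = b
      · exact ⟨j, hj, h, Or.inl rfl⟩
      · rcases Nat.eq_zero_or_pos j with h0 | h0
        · exact ⟨n - 1, by omega, by omega, by omega⟩
        · exact ⟨j - 1, by omega, by omega, by omega⟩
    refine ⟨cycEdge g k, ⟨Finset.mem_image_of_mem _ (by simp [hk, hkb]),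
      (mem_cycEdge_iff hn hclosed hinj hk hj).2 hkj⟩, ?_⟩
    rintro e ⟨he, hmem⟩
    obtain ⟨i, hi, rfl⟩ := Finset.mem_image.1 he
    obtain ⟨hi, hib⟩ := Finset.mem_filter.1 hi
    rw [Finset.mem_range] at hi
    rw [mem_cycEdge_iff hn hclosed hinj hi hj] at hmem
    have : i = k := by omega
    rw [this]

end Enumeration

lemma walk_mem_edges_iff {V : Type*} {G : SimpleGraph V} {u v : V} (p : G.Walk u v)
    (e : Sym2 V) : e ∈ p.edges ↔ ∃ i < p.length, cycEdge p.getVert i = e := by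
  induction p with
  | nil => simp
  | cons h q ih =>
    rw [SimpleGraph.Walk.edges_cons, List.mem_cons, ih, SimpleGraph.Walk.length_cons]
    constructor
    · rintro (rfl | ⟨i, hi, rfl⟩)
      · exact ⟨0, by omega, by simp [cycEdge]⟩
      · exact ⟨i + 1, by omega, by simp [cycEdge]⟩
    · rintro ⟨i, hi, rfl⟩
      cases i with
      | zero => exact Or.inl (by simp [cycEdge])
      | succ i => exact Or.inr ⟨i, by omega, by simp [cycEdge]⟩

/-- Two copies of a maximum-weight cycle cover plus one copy of a maximum-weight
perfect matching have total weight at least `(5/2)·opt`. -/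
theorem two_cycle_covers_plus_matching_ge_five_halves_opt
    {V : Type*} [Fintype V] [DecidableEq V] (n : ℕ)
    (hcard : Fintype.card V = n) (hn : 4 ≤ n) (heven : Even n)
    (w : Sym2 V → ℝ) (hw : ∀ e, 0 ≤ w e)
    (C M : Finset (Sym2 V))
    (hC : IsCycleCoverEdges C)
    (hCmax : ∀ C' : Finset (Sym2 V), IsCycleCoverEdges C' →
      ∑ e ∈ C', w e ≤ ∑ e ∈ C, w e)
    (hM : IsPerfectMatchingEdges M)
    (hMmax : ∀ M' : Finset (Sym2 V), IsPerfectMatchingEdges M' →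
      ∑ e ∈ M', w e ≤ ∑ e ∈ M, w e)
    (v₀ : V) (p : (⊤ : SimpleGraph V).Walk v₀ v₀) (hp : p.IsHamiltonianCycle) :
    (5 / 2 : ℝ) * ∑ e ∈ p.edges.toFinset, w e ≤
      2 * ∑ e ∈ C, w e + ∑ e ∈ M, w e := by
  have hlen : p.length = n := hp.length_eq.trans hcard
  have hn3 : 3 ≤ n := by omega
  have hclosed : p.getVert n = p.getVert 0 := by
    rw [← hlen, p.getVert_length, p.getVert_zero]
  have hinj : ∀ i < n, ∀ j < n, p.getVert i = p.getVert j → i = j := fun i hi j hj h =>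
    hp.isCycle.getVert_injOn' (by rw [Set.mem_ofPred_eq]; omega)
      (by rw [Set.mem_ofPred_eq]; omega) h
  have hsurj : ∀ v, ∃ i < n, p.getVert i = v := by
    intro v
    obtain ⟨i, hi, hle⟩ :=
      SimpleGraph.Walk.mem_support_iff_exists_getVert.1 (hp.mem_support v)
    by_cases hin : i = n
    · exact ⟨0, by omega, by rw [← hclosed, ← hin, hi]⟩
    · exact ⟨i, by omega, hi⟩
  have hedges : p.edges.toFinset = (Finset.range n).image (cycEdge p.getVert) := by
    ext e
    simp [walk_mem_edges_iff, hlen]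
  have hsum : ∀ s ⊆ Finset.range n,
      ∑ e ∈ s.image (cycEdge p.getVert), w e = ∑ i ∈ s, w (cycEdge p.getVert i) :=
    fun s hs => Finset.sum_image fun i hi j hj h => cycEdge_injOn hn3 hclosed hinj
      (Finset.mem_range.1 (hs hi)) (Finset.mem_range.1 (hs hj)) h
  have hcov := hCmax _ (isCycleCoverEdges_cycEdge hn3 hclosed hinj hsurj)
  have h0 := hMmax _
    (isPerfectMatchingEdges_cycEdge hn3 heven hclosed hinj hsurj (b := 0) (by omega))
  have h1 := hMmax _
    (isPerfectMatchingEdges_cycEdge hn3 heven hclosed hinj hsurj (b := 1) (by omega))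
  rw [hsum _ (Finset.filter_subset _ _)] at h0 h1
  rw [hsum _ subset_rfl] at hcov
  rw [hedges, hsum _ subset_rfl]
  have hsplit := Finset.sum_filter_add_sum_filter_not (Finset.range n) (· % 2 = 0)
    fun i => w (cycEdge p.getVert i)
  simp only [Nat.mod_two_ne_zero] at hsplit
  linarith
end

section
/- Let H be the multigraph on three vertices u, v, w consisting of two copies of each of the edges {u,v}, {v,w}, {u,w} together with a third copy of the edge {u,v} (seven edge-copies in total). Then H admits no path-3-coloring. -/
/-!
Three copies of `{u,v}` must use all three colors, while `{v,w}` and `{u,w}` each use two of the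
three colors and hence share one (pigeonhole, `2 + 2 > 3`). The shared color occurs on all three
edges of the triangle, so its color class contains a 3-cycle and is not a forest.
-/

/-- A simple graph is a linear forest if it is acyclic and every vertex has
degree at most 2 (i.e., it is a vertex-disjoint union of simple paths). -/
def IsLinearForest {V : Type*} (G : SimpleGraph V) : Prop :=
  G.IsAcyclic ∧ ∀ v : V, (G.neighborSet v).ncard ≤ 2

/-- A path-`k`-coloring of the multigraph with edge-multiplicity function `m`:
each edge receives a set of colors of size equal to its multiplicity (so parallel
copies get distinct colors), and each color class is a linear forest. -/
def IsPathColoring {V : Type*} (k : ℕ) (m : Sym2 V → ℕ)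
    (f : Sym2 V → Finset (Fin k)) : Prop :=
  (∀ e, (f e).card = m e) ∧
    ∀ c : Fin k, IsLinearForest (SimpleGraph.fromEdgeSet {e | c ∈ f e})

def PathColorable {V : Type*} (k : ℕ) (m : Sym2 V → ℕ) : Prop :=
  ∃ f, IsPathColoring k m f

theorem not_isAcyclic_of_triangle {V : Type*} {G : SimpleGraph V} {u v w : V}
    (huv : G.Adj u v) (hvw : G.Adj v w) (hwu : G.Adj w u) : ¬ G.IsAcyclic := by
  intro h
  have hc : (SimpleGraph.Walk.cons huv
      (SimpleGraph.Walk.cons hvw (SimpleGraph.Walk.cons hwu SimpleGraph.Walk.nil))).IsCycle := by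
    have h1 := huv.ne
    have h2 := hvw.ne
    have h3 := hwu.ne
    rw [SimpleGraph.Walk.cons_isCycle_iff]
    simp [h1, h2, h3, h1.symm, h3.symm]
  exact h _ hc

/-- The multigraph of a 3-kite (a doubled triangle together with a third copy of
one of its edges, seven edge-copies in total) admits no path-3-coloring. -/
theorem three_kite_not_path_three_colorable
    {V : Type*} [DecidableEq V] (u v w : V)
    (huv : u ≠ v) (hvw : v ≠ w) (huw : u ≠ w) :
    ¬ PathColorable 3 (fun e =>
      if e = s(u, v) then 3 else if e = s(v, w) then 2 else
        if e = s(u, w) then 2 else 0) := by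
  rintro ⟨f, hcard, hforest⟩
  have h1 : (f s(u, v)).card = 3 := by simpa using hcard s(u, v)
  have h2 : (f s(v, w)).card = 2 := by
    simpa [huv, huv.symm, hvw, hvw.symm, huw, huw.symm] using hcard s(v, w)
  have h3 : (f s(u, w)).card = 2 := by
    simpa [huv, huv.symm, hvw, hvw.symm, huw, huw.symm] using hcard s(u, w)
  have hall : f s(u, v) = Finset.univ := by
    rw [← Finset.card_eq_iff_eq_univ, h1, Fintype.card_fin]
  obtain ⟨c, hc⟩ : (f s(v, w) ∩ f s(u, w)).Nonempty := by
    rw [← Finset.card_pos]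
    have hsum := Finset.card_union_add_card_inter (f s(v, w)) (f s(u, w))
    have hle : (f s(v, w) ∪ f s(u, w)).card ≤ 3 := card_finset_fin_le _
    omega
  rw [Finset.mem_inter] at hc
  refine not_isAcyclic_of_triangle (u := u) (v := v) (w := w) ?_ ?_ ?_ (hforest c).1
  · simp [hall, huv]
  · simp [hc.1, hvw]
  · simp [Sym2.eq_swap (a := w) (b := u), hc.2, huw.symm]
end

section
/- Let u, v, w, z be four vertices and let H be the multigraph consisting of two copies of each of the four edges {u,v}, {v,w}, {w,z}, {z,u} of the 4-cycle u v w z, together with one copy of each of two further vertex-disjoint edges on {u,v,w,z} (each of these two edges may be a side or a diagonal of the 4-cycle), ten edge-copies in total. Then H admits no path-3-coloring. -/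
/-- A forest on a finite nonempty vertex set has fewer edges than vertices. -/
lemma SimpleGraph.IsAcyclic.card_edgeFinset_add_one_le {V : Type*} [Fintype V] [Nonempty V]
    {G : SimpleGraph V} [Fintype G.edgeSet] (hG : G.IsAcyclic) :
    G.edgeFinset.card + 1 ≤ Fintype.card V := by
  classical
  obtain ⟨T, hGT, -, hT⟩ :=
    SimpleGraph.connected_top.exists_isTree_le_of_le_of_isAcyclic (le_top (a := G)) hG
  rw [← hT.card_edgeFinset]
  gcongr

/-- The edge count for forests, localized to a finite set `s` of vertices of a possibly infinite
vertex type. -/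
lemma SimpleGraph.IsAcyclic.card_add_one_le_of_subset_sym2 {V : Type*} [DecidableEq V]
    {G : SimpleGraph V} (hG : G.IsAcyclic) {s : Finset V} (hs : s.Nonempty)
    {t : Finset (Sym2 V)} (hts : t ⊆ s.sym2) (htG : ∀ e ∈ t, e ∈ G.edgeSet) :
    t.card + 1 ≤ s.card := by
  classical
  have : Nonempty (s : Set V) := hs.to_subtype
  have hsub : t ⊆ (G.induce (s : Set V)).edgeFinset.image (Sym2.map Subtype.val) := by
    intro e he
    have h1 := hts he
    have h2 := htG e he
    induction e with | _ a b
    rw [Finset.mk_mem_sym2_iff] at h1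
    exact Finset.mem_image.2
      ⟨s(⟨a, h1.1⟩, ⟨b, h1.2⟩), by simpa using h2, rfl⟩
  have h1 := (Finset.card_le_card hsub).trans Finset.card_image_le
  have h2 := (hG.induce (s : Set V)).card_edgeFinset_add_one_le
  have h3 : Fintype.card (s : Set V) = s.card := by simp
  omega

/-- The multigraph of a 4-kite (a doubled 4-cycle `u v w z` together with one
copy of each of two further vertex-disjoint edges on its vertices — each a side
or a diagonal — ten edge-copies in total) admits no path-3-coloring. -/
theorem four_kite_not_path_three_colorable
    {V : Type*} [DecidableEq V] (u v w z : V)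
    (hdist : [u, v, w, z].Pairwise (· ≠ ·))
    (e₁ e₂ : Sym2 V) (h₁ : ¬ e₁.IsDiag) (h₂ : ¬ e₂.IsDiag)
    (hs₁ : ∀ a ∈ e₁, a = u ∨ a = v ∨ a = w ∨ a = z)
    (hs₂ : ∀ a ∈ e₂, a = u ∨ a = v ∨ a = w ∨ a = z)
    (hdisj : ∀ a : V, a ∈ e₁ → a ∉ e₂) :
    ¬ PathColorable 3 (fun e =>
      (if e = s(u, v) ∨ e = s(v, w) ∨ e = s(w, z) ∨ e = s(z, u) then 2 else 0)
        + (if e = e₁ then 1 else 0) + (if e = e₂ then 1 else 0)) := by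
  classical
  rintro ⟨f, hcard, hforest⟩
  simp only [List.pairwise_cons, List.mem_cons, List.not_mem_nil, or_false, forall_eq_or_imp,
    forall_eq] at hdist
  obtain ⟨⟨huv, huw, huz⟩, ⟨hvw, hvz⟩, hwz, -⟩ := hdist
  set s : Finset V := {u, v, w, z} with hs
  -- The six possible edges on the four vertices.
  set T : Finset (Sym2 V) := s.sym2.filter (¬ ·.IsDiag) with hT
  set C : Finset (Sym2 V) := {s(u, v), s(v, w), s(w, z), s(z, u)} with hC
  have hscard : s.card ≤ 4 := Finset.card_le_four
  have hCcard : C.card = 4 := by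
    rw [hC]
    repeat rw [Finset.card_insert_of_notMem]
    · simp
    all_goals
      simp [huv, huw, huz, hvw, hvz, hwz, huv.symm, huw.symm, huz.symm]
  have hCT : C ⊆ T := by
    intro e he
    simp only [hC, Finset.mem_insert, Finset.mem_singleton] at he
    rcases he with rfl | rfl | rfl | rfl <;> simp [hT, hs, huv, hvw, hwz, huz.symm]
  have he₁ : e₁ ∈ T := by simpa [hT, hs, Finset.mem_sym2_iff, h₁] using hs₁
  have he₂ : e₂ ∈ T := by simpa [hT, hs, Finset.mem_sym2_iff, h₂] using hs₂
  have hclass : ∀ c : Fin 3, (T.filter (c ∈ f ·)).card ≤ 3 := by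
    intro c
    have := (hforest c).1.card_add_one_le_of_subset_sym2 (s := s) (t := T.filter (c ∈ f ·))
      ⟨u, by simp [hs]⟩ (fun e he => (Finset.mem_filter.1 (Finset.mem_filter.1 he).1).1)
      (fun e he => by
        simp only [hT, Finset.mem_filter] at he
        simpa [SimpleGraph.edgeSet_fromEdgeSet] using ⟨he.2, he.1.2⟩)
    omega
  have hupper : ∑ e ∈ T, (f e).card ≤ 9 := by
    have h := Finset.sum_card_bipartiteAbove_eq_sum_card_bipartiteBelow
      (s := T) (t := (Finset.univ : Finset (Fin 3))) (fun e c => c ∈ f e)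
    simp only [Finset.bipartiteAbove, Finset.bipartiteBelow, Finset.filter_univ_mem] at h
    rw [h]
    exact (Finset.sum_le_card_nsmul _ _ 3 fun c _ => hclass c).trans (by simp)
  have hcycle : 8 ≤ ∑ e ∈ T,
      (if e = s(u, v) ∨ e = s(v, w) ∨ e = s(w, z) ∨ e = s(z, u) then 2 else 0) := by
    calc 8 = ∑ e ∈ C, 2 := by simp [hCcard]
      _ = ∑ e ∈ C, (if e = s(u, v) ∨ e = s(v, w) ∨ e = s(w, z) ∨ e = s(z, u) then 2 else 0) :=
        Finset.sum_congr rfl fun e he => (if_pos (by simpa [hC] using he)).symm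
      _ ≤ _ := Finset.sum_le_sum_of_subset hCT
  simp only [hcard, Finset.sum_add_distrib, Finset.sum_ite_eq', he₁, he₂, if_true] at hupper
  omega
end

section
/- Let u, v, w be three vertices and u', v', w' three further pairwise distinct vertices. Let H be the multigraph consisting of two copies of each of the triangle edges {u,v}, {v,w}, {u,w} together with one copy of each of the pendant edges {u,u'}, {v,v'}, {w,w'}. Then for every color k ∈ {1,2,3}, there is no path-3-coloring of H in which all three pendant edges receive the color k. -/
/-- The finiteness hypothesis is needed because `Set.ncard` of an infinite set is `0`. -/
theorem IsLinearForest.not_three_neighbors {V : Type*} {G : SimpleGraph V} (hG : IsLinearForest G)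
    {a x y z : V} (hfin : (G.neighborSet a).Finite) (hx : G.Adj a x) (hy : G.Adj a y)
    (hz : G.Adj a z) (hxy : x ≠ y) (hxz : x ≠ z) (hyz : y ≠ z) : False := by
  have hsub : ({x, y, z} : Set V) ⊆ G.neighborSet a := by
    rintro t (rfl | rfl | rfl) <;> assumption
  have h3 : ({x, y, z} : Set V).ncard = 3 :=
    Set.ncard_eq_three.2 ⟨x, y, z, hxy, hxz, hyz, rfl⟩
  have := Set.ncard_le_ncard hsub hfin
  have := hG.2 a
  omega

theorem SimpleGraph.IsAcyclic.not_triangle {V : Type*} {G : SimpleGraph V} (hG : G.IsAcyclic)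
    {a b c : V} (hab : G.Adj a b) (hbc : G.Adj b c) (hac : G.Adj a c) : False := by
  refine hG (.cons hab (.cons hbc (.cons hac.symm .nil))) ?_
  have := hab.ne
  have := hbc.ne
  have := hac.ne
  rw [SimpleGraph.Walk.cons_isCycle_iff]
  constructor
  · simp_all [SimpleGraph.Walk.isPath_def, eq_comm]
  · simp_all [eq_comm]

/-- Three pairs of colors out of three, at most one of which contains `k`, share a color. -/
theorem exists_common_color (k : Fin 3) (A B C : Finset (Fin 3))
    (hA : A.card = 2) (hB : B.card = 2) (hC : C.card = 2)
    (hAB : ¬ (k ∈ A ∧ k ∈ B)) (hAC : ¬ (k ∈ A ∧ k ∈ C)) (hBC : ¬ (k ∈ B ∧ k ∈ C)) :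
    ∃ c, c ∈ A ∧ c ∈ B ∧ c ∈ C := by
  have key : ∀ (k : Fin 3) (A : Finset (Fin 3)), A.card = 2 → k ∉ A → ∀ c, c ≠ k → c ∈ A := by
    decide
  have other : ∀ (k : Fin 3) (A : Finset (Fin 3)), A.card = 2 → ∃ c, c ≠ k ∧ c ∈ A := by
    decide
  by_cases hkA : k ∈ A
  · obtain ⟨c, hck, hc⟩ := other k A hA
    exact ⟨c, hc, key k B hB (fun h => hAB ⟨hkA, h⟩) c hck, key k C hC (fun h => hAC ⟨hkA, h⟩) c hck⟩
  · by_cases hkB : k ∈ B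
    · obtain ⟨c, hck, hc⟩ := other k B hB
      exact ⟨c, key k A hA hkA c hck, hc, key k C hC (fun h => hBC ⟨hkB, h⟩) c hck⟩
    · obtain ⟨c, hck, hc⟩ := other k C hC
      exact ⟨c, key k A hA hkA c hck, key k B hB hkB c hck, hc⟩

/-- A doubled triangle `u v w` with three pendant edges `{u,u'}, {v,v'}, {w,w'}`
has no path-3-coloring in which all three pendant edges receive the same color. -/
theorem triangle_with_monochromatic_pendants_not_colorable
    {V : Type*} [DecidableEq V] (u v w u' v' w' : V)
    (hdist : [u, v, w, u', v', w'].Pairwise (· ≠ ·))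
    (k : Fin 3) :
    ¬ ∃ f : Sym2 V → Finset (Fin 3),
        IsPathColoring 3 (fun e =>
          (if e = s(u, v) ∨ e = s(v, w) ∨ e = s(u, w) then 2 else 0)
            + (if e = s(u, u') ∨ e = s(v, v') ∨ e = s(w, w') then 1 else 0)) f ∧
        k ∈ f s(u, u') ∧ k ∈ f s(v, v') ∧ k ∈ f s(w, w') := by
  rintro ⟨f, ⟨hcard, hlin⟩, hu, hv, hw⟩
  simp only [List.pairwise_cons, List.mem_cons, List.not_mem_nil, or_false, forall_eq_or_imp,
    forall_eq, ne_eq] at hdist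
  obtain ⟨⟨huv, huw, huu', huv', huw'⟩, ⟨hvw, hvu', hvv', hvw'⟩, ⟨hwu', hwv', hww'⟩, -⟩ := hdist
  have cuv : (f s(u, v)).card = 2 := by
    rw [hcard]; simp_all
  have cvw : (f s(v, w)).card = 2 := by
    rw [hcard]; simp_all
  have cuw : (f s(u, w)).card = 2 := by
    rw [hcard]; simp_all
  have hadj {a b : V} {c : Fin 3} (hc : c ∈ f s(a, b)) (hab : a ≠ b) :
      (SimpleGraph.fromEdgeSet {e | c ∈ f e}).Adj a b :=
    (SimpleGraph.fromEdgeSet_adj _).2 ⟨hc, hab⟩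
  have hfin (a : V) (c : Fin 3) :
      ((SimpleGraph.fromEdgeSet {e | c ∈ f e}).neighborSet a).Finite := by
    refine Set.Finite.subset (s := {u, v, w, u', v', w'}) (Set.toFinite _) fun x hx => ?_
    have hmem : c ∈ f s(a, x) := ((SimpleGraph.fromEdgeSet_adj _).1 hx).1
    have hpos := Finset.card_pos.2 ⟨c, hmem⟩
    rw [hcard] at hpos
    by_contra hx'
    simp only [Set.mem_insert_iff, Set.mem_singleton_iff, not_or] at hx'
    simp [hx'] at hpos
  obtain ⟨c, h1, h2, h3⟩ := exists_common_color k _ _ _ cuv cvw cuw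
    (fun h => (hlin k).not_three_neighbors (hfin v k) (hadj h.1 huv).symm (hadj h.2 hvw)
      (hadj hv hvv') huw huv' hwv')
    (fun h => (hlin k).not_three_neighbors (hfin u k) (hadj h.1 huv) (hadj h.2 huw)
      (hadj hu huu') hvw hvu' hwu')
    (fun h => (hlin k).not_three_neighbors (hfin w k) (hadj h.1 hvw).symm (hadj h.2 huw).symm
      (hadj hw hww') (Ne.symm huv) hvw' huw')
  exact (hlin c).1.not_triangle (hadj h1 huv) (hadj h2 hvw) (hadj h3 huw)
end

section
/- Let m ≥ 2 and let v_1, …, v_{2m} be the vertices of a cycle of even length 2m, and let v_1', …, v_{2m}' be 2m further pairwise distinct vertices. Let H be the multigraph consisting of two copies of each cycle edge {v_i, v_{i+1}} (indices modulo 2m) together with one copy of each pendant edge {v_i, v_i'}. Let k_1 ≠ k_2 be two colors in {1,2,3}. Then there is no path-3-coloring of H in which the pendant edges are colored alternately with k_1 and k_2 (i.e., {v_i, v_i'} receives k_1 for odd i and k_2 for even i). -/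
lemma mod_ne_add_mod {n : ℕ} (i d : ℕ) (hd : 0 < d) (hdn : d < n) : i % n ≠ (i + d) % n := by
  intro h
  have h1 : n ∣ (i + d) - i := (Nat.modEq_iff_dvd' (Nat.le_add_right i d)).1 h
  rw [Nat.add_sub_cancel_left] at h1
  exact absurd (Nat.le_of_dvd hd h1) (by omega)

/-- A graph containing a cycle `a 0, …, a (n-1)` is not acyclic: the closing edge is not
a bridge. -/
lemma not_isAcyclic_of_cycle {V : Type*} (G : SimpleGraph V) (n : ℕ) (hn : 3 ≤ n) (a : ℕ → V)
    (ha : ∀ i < n, ∀ j < n, a i = a j → i = j)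
    (hG : ∀ i < n, G.Adj (a i) (a ((i + 1) % n))) : ¬ G.IsAcyclic := by
  intro hac
  have hlast : G.Adj (a (n - 1)) (a 0) := by
    have := hG (n - 1) (by omega)
    rwa [show n - 1 + 1 = n by omega, Nat.mod_self] at this
  have hbr := SimpleGraph.isAcyclic_iff_forall_adj_isBridge.1 hac hlast
  rw [SimpleGraph.isBridge_iff] at hbr
  refine hbr ?_
  have key : ∀ i < n, (G \ SimpleGraph.fromEdgeSet {s(a (n - 1), a 0)}).Reachable (a 0) (a i) := by
    intro i
    induction i with
    | zero => intro _; exact SimpleGraph.Reachable.refl _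
    | succ i ih =>
      intro hi
      refine (ih (by omega)).trans (SimpleGraph.Adj.reachable ?_)
      have h1 := hG i (by omega)
      rw [Nat.mod_eq_of_lt hi] at h1
      rw [SimpleGraph.sdiff_adj]
      refine ⟨h1, ?_⟩
      rw [SimpleGraph.fromEdgeSet_adj]
      rintro ⟨h2, -⟩
      rw [Set.mem_singleton_iff, Sym2.eq_iff] at h2
      rcases h2 with ⟨h2, -⟩ | ⟨h2, h3⟩
      · have := ha _ (by omega) _ (by omega) h2
        omega
      · have := ha _ (by omega) _ (by omega) h2
        have := ha _ hi _ (by omega) h3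
        omega
  exact (key (n - 1) (by omega)).symm

/-- A vertex of a linear forest cannot have three distinct neighbors `x, y, z`.
Finiteness of the neighborhood is needed since `Set.ncard` of an infinite set is `0`. -/
lemma three_neighbors_absurd {V : Type*} (G : SimpleGraph V) (hG : IsLinearForest G) (v x y z : V)
    (hfin : (G.neighborSet v).Finite) (hxy : x ≠ y) (hxz : x ≠ z) (hyz : y ≠ z)
    (hx : G.Adj v x) (hy : G.Adj v y) (hz : G.Adj v z) : False := by
  have hsub : ({x, y, z} : Set V) ⊆ G.neighborSet v := by
    rintro w (rfl | rfl | rfl) <;> assumption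
  have h1 := Set.ncard_le_ncard hsub hfin
  have h2 : ({x, y, z} : Set V).ncard = 3 := Set.ncard_eq_three.2 ⟨x, y, z, hxy, hxz, hyz, rfl⟩
  have := hG.2 v
  omega

/-- Two distinct colors out of three cannot both be missed by a set of at least two colors. -/
lemma mem_of_notMem_of_ne : ∀ (S : Finset (Fin 3)) (c d : Fin 3), 2 ≤ S.card → c ∉ S → c ≠ d →
    d ∈ S := by
  decide

lemma exists_third_color : ∀ c d : Fin 3, ∃ k : Fin 3, k ≠ c ∧ k ≠ d := by
  decide

/-- A doubled even cycle `a 0, a 1, …, a (2m-1)` (each cycle edge with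
multiplicity 2) with a pendant edge `{a i, b i}` at each vertex has no
path-3-coloring in which the pendant edges are colored alternately with two
distinct colors `k₁` and `k₂`. -/
theorem even_cycle_with_alternating_pendants_not_colorable
    {V : Type*} [DecidableEq V] (m : ℕ) (hm : 2 ≤ m)
    (a b : ℕ → V)
    (ha : ∀ i < 2 * m, ∀ j < 2 * m, a i = a j → i = j)
    (hb : ∀ i < 2 * m, ∀ j < 2 * m, b i = b j → i = j)
    (hab : ∀ i < 2 * m, ∀ j < 2 * m, a i ≠ b j)
    (k₁ k₂ : Fin 3) (hk : k₁ ≠ k₂) :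
    ¬ ∃ f : Sym2 V → Finset (Fin 3),
        IsPathColoring 3 (fun e =>
          2 * ((Finset.range (2 * m)).filter
                (fun i => e = s(a i, a ((i + 1) % (2 * m))))).card
            + ((Finset.range (2 * m)).filter (fun i => e = s(a i, b i))).card) f ∧
        ∀ i < 2 * m, f s(a i, b i) = {if i % 2 = 0 then k₁ else k₂} := by
  rintro ⟨f, ⟨hcard, hlin⟩, hpend⟩
  have hlt : ∀ i, i % (2 * m) < 2 * m := fun i => Nat.mod_lt _ (by omega)
  obtain ⟨F, hF⟩ : ∃ F : ℕ → Finset (Fin 3),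
      ∀ i, F i = f s(a (i % (2 * m)), a ((i + 1) % (2 * m))) := ⟨_, fun _ => rfl⟩
  obtain ⟨p, hp⟩ : ∃ p : ℕ → Fin 3, ∀ i, p i = if i % 2 = 0 then k₁ else k₂ := ⟨_, fun _ => rfl⟩
  have hpn : ∀ i, p i ≠ p (i + 1) := by
    intro i
    rw [hp, hp]
    rcases Nat.mod_two_eq_zero_or_one i with h | h
    · rw [if_pos h, if_neg (by omega)]; exact hk
    · rw [if_neg (by omega), if_pos (by omega)]; exact hk.symm
  have hpm : ∀ i, f s(a (i % (2 * m)), b (i % (2 * m))) = {p i} := by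
    intro i
    rw [hpend _ (hlt i), hp, Nat.mod_mod_of_dvd _ (Dvd.intro m rfl)]
  have hFc : ∀ i, 2 ≤ (F i).card := by
    intro i
    rw [hF, hcard]
    have : 0 < ((Finset.range (2 * m)).filter (fun j => s(a (i % (2 * m)), a ((i + 1) % (2 * m)))
        = s(a j, a ((j + 1) % (2 * m))))).card := by
      refine Finset.card_pos.2 ⟨i % (2 * m), ?_⟩
      rw [Finset.mem_filter, Finset.mem_range, Nat.mod_add_mod]
      exact ⟨hlt i, rfl⟩
    dsimp only
    omega
  -- Colored edges have positive multiplicity, so their ends lie among the finitely many named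
  -- vertices.
  have hfin : ∀ (c : Fin 3) (v : V),
      ((SimpleGraph.fromEdgeSet {e | c ∈ f e}).neighborSet v).Finite := by
    intro c v
    refine (((Finset.range (2 * m)).image a) ∪ ((Finset.range (2 * m)).image b)).finite_toSet.subset
      ?_
    intro w hw
    rw [SimpleGraph.mem_neighborSet, SimpleGraph.fromEdgeSet_adj] at hw
    have h1 : 0 < (f s(v, w)).card := Finset.card_pos.2 ⟨c, hw.1⟩
    rw [hcard] at h1
    dsimp only at h1
    have h2 : (∃ i < 2 * m, s(v, w) = s(a i, a ((i + 1) % (2 * m)))) ∨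
        (∃ i < 2 * m, s(v, w) = s(a i, b i)) := by
      by_contra hcon
      push Not at hcon
      rw [Finset.filter_false_of_mem (fun i hi => hcon.1 i (Finset.mem_range.1 hi)),
        Finset.filter_false_of_mem (fun i hi => hcon.2 i (Finset.mem_range.1 hi))] at h1
      simp at h1
    simp only [Finset.coe_union, Finset.coe_image, Finset.coe_range, Set.mem_union, Set.mem_image,
      Set.mem_Iio]
    rcases h2 with ⟨i, hi, h⟩ | ⟨i, hi, h⟩ <;> rw [Sym2.eq_iff] at h
    · rcases h with ⟨-, h⟩ | ⟨-, h⟩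
      · exact Or.inl ⟨_, hlt _, h.symm⟩
      · exact Or.inl ⟨_, hi, h.symm⟩
    · rcases h with ⟨-, h⟩ | ⟨-, h⟩
      · exact Or.inr ⟨_, hi, h.symm⟩
      · exact Or.inl ⟨_, hi, h.symm⟩
  have hane : ∀ i d, 0 < d → d < 2 * m → a (i % (2 * m)) ≠ a ((i + d) % (2 * m)) :=
    fun i d h0 h1 h => mod_ne_add_mod i d h0 h1 (ha _ (hlt _) _ (hlt _) h)
  have hvert : ∀ i, p (i + 1) ∈ F i → p (i + 1) ∉ F (i + 1) := by
    intro i h1 h2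
    rw [hF] at h1 h2
    refine three_neighbors_absurd _ (hlin (p (i + 1))) (a ((i + 1) % (2 * m))) (a (i % (2 * m)))
      (a ((i + 2) % (2 * m))) (b ((i + 1) % (2 * m))) (hfin _ _) (hane i 2 (by omega) (by omega))
      (hab _ (hlt _) _ (hlt _)) (hab _ (hlt _) _ (hlt _)) ?_ ?_ ?_ <;>
      rw [SimpleGraph.fromEdgeSet_adj]
    · exact ⟨by rw [Sym2.eq_swap]; exact h1, (hane i 1 (by omega) (by omega)).symm⟩
    · exact ⟨h2, hane (i + 1) 1 (by omega) (by omega)⟩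
    · refine ⟨?_, hab _ (hlt _) _ (hlt _)⟩
      rw [Set.mem_ofPred_eq, hpm]
      exact Finset.mem_singleton_self _
  obtain ⟨k₃, h31, h32⟩ : ∃ k₃ : Fin 3, k₃ ≠ k₁ ∧ k₃ ≠ k₂ :=
    exists_third_color k₁ k₂
  have hp3 : ∀ i, k₃ ≠ p i := by
    intro i
    rw [hp]
    split_ifs <;> assumption
  obtain ⟨j, hj⟩ : ∃ j, k₃ ∉ F j := by
    by_contra hcon
    push Not at hcon
    refine not_isAcyclic_of_cycle _ (2 * m) (by omega) a ha ?_ (hlin k₃).1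
    intro i hi
    have h1 := hcon i
    have h2 := hane i 1 (by omega) (by omega)
    rw [hF] at h1
    rw [Nat.mod_eq_of_lt hi] at h1 h2
    rw [SimpleGraph.fromEdgeSet_adj]
    exact ⟨h1, h2⟩
  have hprop : ∀ t, p (j + t + 1) ∉ F (j + t + 1) := by
    intro t
    induction t with
    | zero => exact hvert _ (mem_of_notMem_of_ne _ _ _ (hFc _) hj (hp3 _))
    | succ t ih => exact hvert _ (mem_of_notMem_of_ne _ _ _ (hFc _) ih (hpn _))
  have hper : F (j + (2 * m - 1) + 1) = F j := by
    rw [hF, hF, show j + (2 * m - 1) + 1 = j + 2 * m by omega, Nat.add_mod_right,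
      show j + 2 * m + 1 = j + 1 + 2 * m by omega, Nat.add_mod_right]
  have hend := hprop (2 * m - 1)
  rw [hper] at hend
  exact hend (mem_of_notMem_of_ne _ _ _ (hFc _) hj (hp3 _))
end

section
/- Let ℓ ≥ 4, let v_1, …, v_ℓ be the vertices of a cycle of length ℓ, and let v_1', …, v_ℓ' be ℓ further pairwise distinct vertices. Let H be the multigraph consisting of two copies of each cycle edge {v_i, v_{i+1}} (indices modulo ℓ) together with one copy of each pendant edge {v_i, v_i'}. Then for every color k ∈ {1,2,3} there exists a path-3-coloring of H in which every pendant edge receives the color k. -/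
/-- If every vertex has at most one neighbor of rank at most its own, the graph has no cycle: a
vertex of maximal rank on a cycle would have two such neighbors. -/
lemma isAcyclic_of_rank {V : Type*} (G : SimpleGraph V) (r : V → ℕ)
    (h : ∀ v u w, G.Adj v u → G.Adj v w → r u ≤ r v → r w ≤ r v → u = w) : G.IsAcyclic := by
  classical
  intro v c hc
  obtain ⟨m, hm, hmax⟩ := c.support.toFinset.exists_max_image r
    ⟨v, by simp⟩
  rw [List.mem_toFinset] at hm
  have hc' := hc.rotate hm
  have hsupp : ∀ x ∈ (c.rotate m hm).support, r x ≤ r m := by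
    intro x hx
    apply hmax
    rw [List.mem_toFinset]
    simpa using hx
  have hn := hc'.not_nil
  exact hc'.snd_ne_penultimate
    (h m _ _ (SimpleGraph.Walk.adj_snd hn) (SimpleGraph.Walk.adj_penultimate hn).symm
      (hsupp _ (SimpleGraph.Walk.getVert_mem_support _ _))
      (hsupp _ (SimpleGraph.Walk.getVert_mem_support _ _)))

/-- A set of edges of a simple path `c 0, …, c (n - 1)` forms a linear forest. -/
lemma isLinearForest_of_path {V : Type*} (S : Set (Sym2 V)) (n : ℕ) (c : ℕ → V)
    (hc : ∀ i < n, ∀ j < n, c i = c j → i = j)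
    (hS : ∀ e ∈ S, ∃ j, j + 1 < n ∧ e = s(c j, c (j + 1))) :
    IsLinearForest (SimpleGraph.fromEdgeSet S) := by
  classical
  have hr : ∃ r : V → ℕ, ∀ j < n, r (c j) = j := by
    refine ⟨fun v => if h : ∃ j < n, c j = v then h.choose else 0, fun j hj => ?_⟩
    have h : ∃ i < n, c i = c j := ⟨j, hj, rfl⟩
    simp only [dif_pos h]
    exact hc _ h.choose_spec.1 _ hj h.choose_spec.2
  obtain ⟨r, hr⟩ := hr
  have hadj : ∀ v u, (SimpleGraph.fromEdgeSet S).Adj v u →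
      (r v < r u ∧ u = c (r v + 1)) ∨ (r u < r v ∧ u = c (r v - 1)) := by
    intro v u h
    rw [SimpleGraph.fromEdgeSet_adj] at h
    obtain ⟨j, hj, he⟩ := hS _ h.1
    have h1 := hr j (by omega)
    have h2 := hr (j + 1) hj
    rcases Sym2.eq_iff.1 he with ⟨rfl, rfl⟩ | ⟨rfl, rfl⟩
    · left; rw [h1, h2]; exact ⟨by omega, rfl⟩
    · right; rw [h1, h2]; exact ⟨by omega, rfl⟩
  refine ⟨isAcyclic_of_rank _ r ?_, fun v => ?_⟩
  · intro v u w hu hw hru hrw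
    rcases hadj v u hu with h | h
    · omega
    rcases hadj v w hw with h' | h'
    · omega
    rw [h.2, h'.2]
  · have hsub : (SimpleGraph.fromEdgeSet S).neighborSet v ⊆ {c (r v + 1), c (r v - 1)} := by
      intro u hu
      rcases hadj v u hu with h | h <;> simp [h.2]
    exact (Set.ncard_le_ncard hsub (Set.toFinite _)).trans ((Set.ncard_insert_le _ _).trans (by simp))

lemma succ_mod_eq {l i : ℕ} (hi : i < l) : (i + 1) % l = if i + 1 < l then i + 1 else 0 := by
  split_ifs with h
  · exact Nat.mod_eq_of_lt h
  · rw [show i + 1 = l by omega, Nat.mod_self]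

lemma card_filter_range_eq {α : Type*} [DecidableEq α] (l : ℕ) (g : ℕ → α)
    (hg : ∀ i < l, ∀ j < l, g i = g j → i = j) (e : α) [Decidable (∃ i < l, e = g i)] :
    ((Finset.range l).filter (fun i => e = g i)).card = if ∃ i < l, e = g i then 1 else 0 := by
  split_ifs with h
  · obtain ⟨i, hi, rfl⟩ := h
    rw [Finset.card_eq_one]
    refine ⟨i, ?_⟩
    ext j
    simp only [Finset.mem_filter, Finset.mem_range, Finset.mem_singleton]
    constructor
    · rintro ⟨hj, h⟩
      exact (hg _ hi _ hj h).symm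
    · rintro rfl
      exact ⟨hi, rfl⟩
  · rw [Finset.card_eq_zero, Finset.filter_eq_empty_iff]
    intro i hi he
    exact h ⟨i, Finset.mem_range.1 hi, he⟩

/-- A set of edges of the cycle `a 0, …, a (l - 1)` that misses the edge `a m a (m + 1)` is a
linear forest. -/
lemma isLinearForest_of_cycle {V : Type*} (l : ℕ) (a : ℕ → V)
    (ha : ∀ i < l, ∀ j < l, a i = a j → i = j) (m : ℕ) (hm : m + 1 < l) (S : Set (Sym2 V))
    (hS : ∀ e ∈ S, ∃ i < l, i ≠ m ∧ e = s(a i, a ((i + 1) % l))) :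
    IsLinearForest (SimpleGraph.fromEdgeSet S) := by
  -- The path starts at `a (m + 1)` and runs around the cycle to `a m`.
  refine isLinearForest_of_path S l
    (fun j => a (if j + m + 1 < l then j + m + 1 else j + m + 1 - l)) ?_ ?_
  · intro i hi j hj h
    have := ha _ (by split_ifs <;> omega) _ (by split_ifs <;> omega) h
    split_ifs at this <;> omega
  · intro e he
    obtain ⟨i, hi, him, rfl⟩ := hS e he
    rw [succ_mod_eq hi]
    refine ⟨if m < i then i - m - 1 else i + l - m - 1, by split_ifs <;> omega, ?_⟩
    have key : ∀ x y x' y' : ℕ, x = x' → y = y' → s(a x, a y) = s(a x', a y') := by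
      rintro x y _ _ rfl rfl
      rfl
    apply key <;> split_ifs <;> omega

/-- A doubled cycle `a 0, a 1, …, a (l-1)` of length `l ≥ 4` (each cycle edge
with multiplicity 2) with a pendant edge `{a i, b i}` at each vertex admits, for
every color `k`, a path-3-coloring in which every pendant edge receives `k`. -/
theorem long_cycle_with_monochromatic_pendants_colorable
    {V : Type*} [DecidableEq V] (l : ℕ) (hl : 4 ≤ l)
    (a b : ℕ → V)
    (ha : ∀ i < l, ∀ j < l, a i = a j → i = j)
    (hb : ∀ i < l, ∀ j < l, b i = b j → i = j)
    (hab : ∀ i < l, ∀ j < l, a i ≠ b j)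
    (k : Fin 3) :
    ∃ f : Sym2 V → Finset (Fin 3),
      IsPathColoring 3 (fun e =>
        2 * ((Finset.range l).filter
              (fun i => e = s(a i, a ((i + 1) % l)))).card
          + ((Finset.range l).filter (fun i => e = s(a i, b i))).card) f ∧
      ∀ i < l, f s(a i, b i) = {k} := by
  classical
  have hmod : ∀ i, (i + 1) % l < l := fun i => Nat.mod_lt _ (by omega)
  have hcyc : ∀ i < l, ∀ j < l,
      s(a i, a ((i + 1) % l)) = s(a j, a ((j + 1) % l)) → i = j := by
    intro i hi j hj h
    rcases Sym2.eq_iff.1 h with ⟨h1, -⟩ | ⟨h1, h2⟩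
    · exact ha _ hi _ hj h1
    · have h1 := ha _ hi _ (hmod j) h1
      have h2 := ha _ (hmod i) _ hj h2
      rw [succ_mod_eq hj] at h1
      rw [succ_mod_eq hi] at h2
      split_ifs at h1 h2 <;> omega
  have hpen : ∀ i < l, ∀ j < l, s(a i, b i) = s(a j, b j) → i = j := by
    intro i hi j hj h
    rcases Sym2.eq_iff.1 h with ⟨h1, -⟩ | ⟨h1, -⟩
    · exact ha _ hi _ hj h1
    · exact absurd h1 (hab _ hi _ hj)
  have hdisj : ∀ i < l, ∀ j < l, s(a i, a ((i + 1) % l)) ≠ s(a j, b j) := by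
    intro i hi j hj h
    rcases Sym2.eq_iff.1 h with ⟨-, h1⟩ | ⟨h1, -⟩
    · exact hab _ (hmod i) _ hj h1
    · exact hab _ hi _ hj h1
  -- The color missing on the cycle edge with index `i`.
  let miss : ℕ → Fin 3 := fun i => if i = 0 then k + 2 else if i = 2 then k + 1 else k
  let f : Sym2 V → Finset (Fin 3) := fun e =>
    if ∃ i < l, e = s(a i, b i) then {k}
    else if h : ∃ i < l, e = s(a i, a ((i + 1) % l)) then Finset.univ.erase (miss h.choose) else ∅
  have fpen : ∀ i < l, f s(a i, b i) = {k} := fun i hi => if_pos ⟨i, hi, rfl⟩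
  have fcyc : ∀ i < l, f s(a i, a ((i + 1) % l)) = Finset.univ.erase (miss i) := by
    intro i hi
    have h1 : ¬ ∃ j < l, s(a i, a ((i + 1) % l)) = s(a j, b j) := by
      rintro ⟨j, hj, h⟩
      exact hdisj i hi j hj h
    have h2 : ∃ j < l, s(a i, a ((i + 1) % l)) = s(a j, a ((j + 1) % l)) := ⟨i, hi, rfl⟩
    have h3 : h2.choose = i := (hcyc _ hi _ h2.choose_spec.1 h2.choose_spec.2).symm
    simp only [f, if_neg h1, dif_pos h2, h3]
  have fmem : ∀ c e, c ∈ f e → (∃ i < l, e = s(a i, b i) ∧ c = k) ∨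
      (∃ i < l, e = s(a i, a ((i + 1) % l)) ∧ c ≠ miss i) := by
    intro c e hc
    by_cases h1 : ∃ i < l, e = s(a i, b i)
    · obtain ⟨i, hi, rfl⟩ := h1
      rw [fpen i hi] at hc
      exact Or.inl ⟨i, hi, rfl, Finset.mem_singleton.1 hc⟩
    by_cases h2 : ∃ i < l, e = s(a i, a ((i + 1) % l))
    · obtain ⟨i, hi, rfl⟩ := h2
      rw [fcyc i hi] at hc
      exact Or.inr ⟨i, hi, rfl, (Finset.mem_erase.1 hc).1⟩
    simp [f, h1, h2] at hc
  refine ⟨f, ⟨fun e => ?_, fun c => ?_⟩, fpen⟩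
  · simp only []
    rw [card_filter_range_eq l (fun i => s(a i, a ((i + 1) % l))) hcyc e,
      card_filter_range_eq l (fun i => s(a i, b i)) hpen e]
    by_cases h1 : ∃ i < l, e = s(a i, b i)
    · have h2 : ¬ ∃ i < l, e = s(a i, a ((i + 1) % l)) := by
        obtain ⟨j, hj, rfl⟩ := h1
        rintro ⟨i, hi, h⟩
        exact hdisj i hi j hj h.symm
      rw [if_pos h1, if_neg h2]
      obtain ⟨j, hj, rfl⟩ := h1
      rw [fpen j hj]; rfl
    · rw [if_neg h1]
      by_cases h2 : ∃ i < l, e = s(a i, a ((i + 1) % l))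
      · rw [if_pos h2]
        obtain ⟨i, hi, rfl⟩ := h2
        rw [fcyc i hi, Finset.card_erase_of_mem (Finset.mem_univ _)]; rfl
      · rw [if_neg h2]
        simp [f, h1, h2]
  · have hk : c = k ∨ c = k + 1 ∨ c = k + 2 :=
      (by decide : ∀ c k : Fin 3, c = k ∨ c = k + 1 ∨ c = k + 2) c k
    have hk1 : k + 1 ≠ k := (by decide : ∀ k : Fin 3, k + 1 ≠ k) k
    have hk2 : k + 2 ≠ k := (by decide : ∀ k : Fin 3, k + 2 ≠ k) k
    rcases hk with rfl | rfl | rfl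
    · -- Modulo 4, the path repeats the pattern `b, a, a, b`.
      refine isLinearForest_of_path _ (2 * l)
        (fun j => if j % 4 = 1 ∨ j % 4 = 2 then a (j / 2) else b (j / 2)) ?_ ?_
      · intro i hi j hj h
        have hi' : i / 2 < l := by omega
        have hj' : j / 2 < l := by omega
        split_ifs at h
        · have := ha _ hi' _ hj' h; omega
        · exact absurd h (hab _ hi' _ hj')
        · exact absurd h.symm (hab _ hj' _ hi')
        · have := hb _ hi' _ hj' h; omega
      · intro e he
        rcases fmem _ e he with ⟨i, hi, rfl, -⟩ | ⟨i, hi, rfl, h⟩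
        · refine ⟨2 * i, by omega, ?_⟩
          have e1 : 2 * i / 2 = i := by omega
          have e2 : (2 * i + 1) / 2 = i := by omega
          simp only [e1, e2]
          rcases Nat.mod_two_eq_zero_or_one i with h | h
          · rw [if_neg (by omega), if_pos (by omega), Sym2.eq_swap]
          · rw [if_pos (by omega), if_neg (by omega)]
        · have hi02 : i = 0 ∨ i = 2 := by
            by_contra hne
            push Not at hne
            simp [miss, hne.1, hne.2] at h
          have hmod' : (i + 1) % l = i + 1 := Nat.mod_eq_of_lt (by omega)
          rw [hmod']
          refine ⟨2 * i + 1, by omega, ?_⟩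
          rcases hi02 with rfl | rfl <;> simp
    · refine isLinearForest_of_cycle l a ha 2 (by omega) _ fun e he => ?_
      rcases fmem _ e he with ⟨i, hi, -, h⟩ | ⟨i, hi, rfl, h⟩
      · exact absurd h hk1
      · refine ⟨i, hi, ?_, rfl⟩
        rintro rfl
        simp [miss] at h
    · refine isLinearForest_of_cycle l a ha 0 (by omega) _ fun e he => ?_
      rcases fmem _ e he with ⟨i, hi, -, h⟩ | ⟨i, hi, rfl, h⟩
      · exact absurd h hk2
      · refine ⟨i, hi, ?_, rfl⟩
        rintro rfl
        simp [miss] at h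
end

section
/- Let G be the complete graph on an even number n ≥ 4 of vertices, let C be a cycle cover of G and M a perfect matching of G such that C contains no 3-kite and no 4-kite with respect to M. Then the multigraph G_1 consisting of two copies of every edge of C and one copy of every edge of M (so an edge lying in both C and M appears with multiplicity three) admits a path-3-coloring. -/
/-- A 3-kite: a triangle of the cycle cover `C` one of whose edges belongs to
the matching `M`. -/
def IsThreeKite {V : Type*} (C M : Finset (Sym2 V)) (x y z : V) : Prop :=
  x ≠ y ∧ x ≠ z ∧ y ≠ z ∧
    s(x, y) ∈ C ∧ s(y, z) ∈ C ∧ s(x, z) ∈ C ∧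
    (s(x, y) ∈ M ∨ s(y, z) ∈ M ∨ s(x, z) ∈ M)

/-- A 4-kite: a 4-cycle of the cycle cover `C` such that the matching `M`
contains two edges both of whose endpoints are vertices of the 4-cycle. -/
def IsFourKite {V : Type*} (C M : Finset (Sym2 V)) (x y z t : V) : Prop :=
  [x, y, z, t].Pairwise (· ≠ ·) ∧
    s(x, y) ∈ C ∧ s(y, z) ∈ C ∧ s(z, t) ∈ C ∧ s(t, x) ∈ C ∧
    ∃ e₁ ∈ M, ∃ e₂ ∈ M, e₁ ≠ e₂ ∧
      (∀ a ∈ e₁, a = x ∨ a = y ∨ a = z ∨ a = t) ∧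
      (∀ a ∈ e₂, a = x ∨ a = y ∨ a = z ∨ a = t)

/-! ### Three-colourings of an incidence structure -/

section Cover
variable {N E : Type*}

/-- The number of edges of colour `c` incident with the node `x`; here `inc x` is the set of edges
incident with `x` and `m` is a 3-colouring of the edges. -/
def cnt (inc : N → Finset E) (m : E → Fin 3) (x : N) (c : Fin 3) : ℕ :=
  ((inc x).filter (fun e => m e = c)).card

/-- The number of colours that do not occur on the edges incident with `x`. -/
def miss (inc : N → Finset E) (m : E → Fin 3) (x : N) : ℕ :=
  (Finset.univ.filter (fun c => cnt inc m x c = 0)).card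

/-- `m'` misses fewer colours than `m` at the node `x`, and no more than `m` at any other node. -/
def Better (inc : N → Finset E) (m m' : E → Fin 3) (x : N) : Prop :=
  (∀ y, miss inc m' y ≤ miss inc m y) ∧ miss inc m' x < miss inc m x

variable {inc : N → Finset E} {m m' : E → Fin 3} {x y : N}

lemma cnt_pos {c : Fin 3} {e : E} (he : e ∈ inc x) (h : m e = c) : cnt inc m x c ≠ 0 := by
  unfold cnt
  rw [Finset.card_ne_zero]
  exact ⟨e, by simp [he, h]⟩

lemma cnt_eq_zero {c : Fin 3} : cnt inc m x c = 0 ↔ ∀ e ∈ inc x, m e ≠ c := by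
  unfold cnt
  rw [Finset.card_eq_zero, Finset.filter_eq_empty_iff]

lemma cnt_ne_zero {c : Fin 3} : cnt inc m x c ≠ 0 ↔ ∃ e ∈ inc x, m e = c := by
  rw [Ne, cnt_eq_zero]; push Not; rfl

lemma cnt_congr (h : ∀ e ∈ inc x, m' e = m e) (c : Fin 3) : cnt inc m' x c = cnt inc m x c := by
  unfold cnt
  congr 1
  apply Finset.filter_congr
  intro e he
  rw [h e he]

lemma miss_congr (h : ∀ c, cnt inc m' x c = cnt inc m x c) : miss inc m' x = miss inc m x := by
  unfold miss
  simp only [h]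

lemma miss_le (h : ∀ c, cnt inc m x c ≠ 0 → cnt inc m' x c ≠ 0) :
    miss inc m' x ≤ miss inc m x := by
  unfold miss
  apply Finset.card_le_card
  intro c
  simp only [Finset.mem_filter, Finset.mem_univ, true_and]
  exact fun h' => by_contra fun h2 => h c h2 h'

lemma miss_lt {b : Fin 3} (h : ∀ c, cnt inc m x c ≠ 0 → cnt inc m' x c ≠ 0)
    (hb : cnt inc m x b = 0) (hb' : cnt inc m' x b ≠ 0) :
    miss inc m' x < miss inc m x := by
  unfold miss
  apply Finset.card_lt_card
  rw [Finset.ssubset_iff_of_subset]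
  · exact ⟨b, by simp [hb], by simp [hb']⟩
  intro c
  simp only [Finset.mem_filter, Finset.mem_univ, true_and]
  exact fun h' => by_contra fun h2 => h c h2 h'

lemma miss_le_swap (a b : Fin 3) (h : ∀ c, cnt inc m x c ≠ 0 → cnt inc m' x (Equiv.swap a b c) ≠ 0) :
    miss inc m' x ≤ miss inc m x := by
  unfold miss
  apply Finset.card_le_card_of_injOn (Equiv.swap a b)
  · intro c
    simp only [Finset.coe_filter, Finset.mem_univ, true_and, Set.mem_ofPred_eq]
    intro hc
    by_contra h2
    exact h _ h2 (by simpa using hc)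
  · exact (Equiv.swap a b).injective.injOn

variable [DecidableEq E]

lemma cnt_swap {f g : E} (hf : f ∈ inc x) (hg : g ∈ inc x) (h1 : m' f = m g) (h2 : m' g = m f)
    (h : ∀ e ∈ inc x, e ≠ f → e ≠ g → m' e = m e) (c : Fin 3) :
    cnt inc m' x c = cnt inc m x c := by
  unfold cnt
  apply Finset.card_nbij' (Equiv.swap f g) (Equiv.swap f g)
  · intro e
    simp only [Finset.coe_filter, Set.mem_ofPred_eq]
    rintro ⟨he, hc⟩
    by_cases h3 : e = f
    · subst h3; simp [hg, ← h1, hc]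
    by_cases h4 : e = g
    · subst h4; simp [hf, ← h2, hc]
    rw [Equiv.swap_apply_of_ne_of_ne h3 h4]
    exact ⟨he, by rw [← h e he h3 h4, hc]⟩
  · intro e
    simp only [Finset.coe_filter, Set.mem_ofPred_eq]
    rintro ⟨he, hc⟩
    by_cases h3 : e = f
    · subst h3; simp [hg, h2, hc]
    by_cases h4 : e = g
    · subst h4; simp [hf, h1, hc]
    rw [Equiv.swap_apply_of_ne_of_ne h3 h4]
    exact ⟨he, by rw [h e he h3 h4, hc]⟩
  · intro e _; simp
  · intro e _; simp

lemma cnt_update_self {e : E} {c d : Fin 3} (he : e ∈ inc x) (hd : m e ≠ c) (hcd : d = c) :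
    cnt inc (Function.update m e d) x c = cnt inc m x c + 1 := by
  unfold cnt
  have : (inc x).filter (fun e' => Function.update m e d e' = c)
      = insert e ((inc x).filter (fun e' => m e' = c)) := by
    ext e'
    by_cases h : e' = e
    · subst h; simp [he, hcd]
    · simp [h]
  rw [this, Finset.card_insert_of_notMem (by simp [hd])]

lemma cnt_update_old {e : E} {c d : Fin 3} (he : e ∈ inc x) (hc : m e = c) (hd : d ≠ c) :
    cnt inc (Function.update m e d) x c + 1 = cnt inc m x c := by
  unfold cnt
  have : (inc x).filter (fun e' => m e' = c)
      = insert e ((inc x).filter (fun e' => Function.update m e d e' = c)) := by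
    ext e'
    by_cases h : e' = e
    · subst h; simp [he, hc]
    · simp [h]
  rw [this, Finset.card_insert_of_notMem (by simp [hd])]

lemma cnt_update_other {e : E} {c d : Fin 3} (h : e ∉ inc x ∨ (m e ≠ c ∧ d ≠ c)) :
    cnt inc (Function.update m e d) x c = cnt inc m x c := by
  unfold cnt
  congr 1
  apply Finset.filter_congr
  intro e' he'
  by_cases h' : e' = e
  · subst h'; rcases h with h | h
    · exact absurd he' h
    · simp [h]
  · simp [h']

omit [DecidableEq E] in
lemma exists_ne_of_two_le {c : Fin 3} (h : 2 ≤ cnt inc m x c) (f : E) :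
    ∃ g ∈ inc x, g ≠ f ∧ m g = c := by
  unfold cnt at h
  obtain ⟨g, hg, hgf⟩ := Finset.exists_mem_ne (Nat.lt_of_succ_le h) f
  simp only [Finset.mem_filter] at hg
  exact ⟨g, hg.1, hgf, hg.2⟩

lemma exists_ne_of_three_le {c : Fin 3} (h : 3 ≤ cnt inc m x c) (f f' : E) :
    ∃ g ∈ inc x, g ≠ f ∧ g ≠ f' ∧ m g = c := by
  unfold cnt at h
  have : (({f, f'} : Finset E)).card < ((inc x).filter (fun e => m e = c)).card :=
    lt_of_le_of_lt (Finset.card_le_two) (by omega)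
  obtain ⟨g, hg, hgf⟩ := Finset.exists_mem_notMem_of_card_lt_card this
  simp only [Finset.mem_filter] at hg
  simp only [Finset.mem_insert, Finset.mem_singleton, not_or] at hgf
  exact ⟨g, hg.1, hgf.1, hgf.2, hg.2⟩

/-- Every edge is incident with at most two nodes. An edge incident with a single node only plays the
role of a loop and counts once there. -/
def AtMostTwo (inc : N → Finset E) : Prop :=
  ∀ e x y z, e ∈ inc x → e ∈ inc y → e ∈ inc z → x ≠ y → z = x ∨ z = y

/-- `m'` arises from `m` by exchanging `a` and `b` on some edges, in such a way that all edges of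
colour `a` at `x` become `b`, no other edge at `x` changes, and no colour count changes at any other
node. -/
def Flipped (inc : N → Finset E) (m m' : E → Fin 3) (x : N) (a b : Fin 3) : Prop :=
  (∀ e, m e ≠ a → m e ≠ b → m' e = m e) ∧
  (∀ y, y ≠ x → ∀ c, cnt inc m' y c = cnt inc m y c) ∧
  (∀ e ∈ inc x, m' e = if m e = a then b else m e)

/-- The induction behind `trail`. The colouring `m1` is `m` with `a` and `b` exchanged along an
alternating trail that starts at `x` with the edge `v` and has reached the node `y` through the edge
`f`. The set `S` consists of the nodes passed so far; at those other than `x` the trail has changed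
one edge from `a` to `b` and one from `b` to `a`, hence no colour counts. The trail either ends at
`y`, or goes on with an edge `g` of the colour `m1 f`: to a new node (the inductive step, on the
number of nodes outside `S`), to another node of `S`, or back to `x`. -/
lemma trail_aux [Fintype N] [DecidableEq N] (h2 : AtMostTwo inc) {a b : Fin 3} (hab : a ≠ b)
    {v : E} (hv : v ∈ inc x) (hxb : cnt inc m x b = 0) (hxa : 2 ≤ cnt inc m x a) (n : ℕ) :
    ∀ (S : Finset N) (m1 : E → Fin 3) (y : N) (f : E), (Sᶜ).card = n →
    (∀ e, m1 e = m e ∨ (m e = a ∧ m1 e = b) ∨ (m e = b ∧ m1 e = a)) →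
    x ∈ S → y ∉ S →
    (∀ e z, m1 e ≠ m e → e ∈ inc z → z ∈ S ∨ z = y) →
    (∀ e ∈ inc y, m1 e ≠ m e → e = f) → m1 f ≠ m f → f ∈ inc y →
    (∀ z ∈ S, z ≠ x → (∀ c, cnt inc m1 z c = cnt inc m z c) ∧
      (∃ e ∈ inc z, m1 e ≠ m e ∧ m1 e = a) ∧ (∃ e ∈ inc z, m1 e ≠ m e ∧ m1 e = b)) →
    m v = a → m1 v = b → (∀ e ∈ inc x, m1 e ≠ m e → e = v) →
    (∃ m', Better inc m m' x) ∨ (cnt inc m x a = 2 ∧ ∃ m', Flipped inc m m' x a b) := by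
  induction n using Nat.strong_induction_on with
  | _ n ih =>
  intro S m1 y f hn hI0 hxS hyS hI2 hI3 hf hfy hI4 hva hvb hI5
  have hyx : y ≠ x := fun h => hyS (h ▸ hxS)
  -- `x` has gained `b` and still sees `a`, so `m1` improves `m` there
  have hx1 : miss inc m1 x < miss inc m x := by
    apply miss_lt (b := b) _ hxb (cnt_pos hv hvb)
    intro c hc
    by_cases hca : c = a
    · obtain ⟨g, hg, hgv, hga⟩ := exists_ne_of_two_le hxa v
      refine cnt_pos hg ?_
      have := hI5 g hg
      grind
    · obtain ⟨e, he, hec⟩ := cnt_ne_zero.1 hc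
      refine cnt_pos he ?_
      grind
  have hS1 : ∀ z, z ≠ y → miss inc m1 z ≤ miss inc m z := by
    intro z hz
    by_cases hzx : z = x
    · rw [hzx]; exact hx1.le
    by_cases hzS : z ∈ S
    · exact (miss_congr (hI4 z hzS hzx).1).le
    · apply (miss_congr (cnt_congr _)).le
      intro e he
      by_contra h
      rcases hI2 e z h he with h | h <;> contradiction
  -- names for the two colours of `f`
  obtain ⟨c, c', hc, hc', hcc, hsw⟩ : ∃ c c', m f = c ∧ m1 f = c' ∧ c ≠ c' ∧
      ((c = a ∧ c' = b) ∨ (c = b ∧ c' = a)) := by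
    refine ⟨m f, m1 f, rfl, rfl, hf.symm, ?_⟩
    have := hI0 f
    tauto
  -- if `y` keeps its old colour `c`, the trail may end here
  by_cases hA : cnt inc m1 y c ≠ 0
  · left
    refine ⟨m1, fun z => ?_, hx1⟩
    by_cases hz : z = y
    · subst hz
      apply miss_le
      intro d hd
      by_cases hdc : d = c
      · rwa [hdc]
      by_cases hdc' : d = c'
      · exact hdc' ▸ cnt_pos hfy hc'
      obtain ⟨e, he, hec⟩ := cnt_ne_zero.1 hd
      refine cnt_pos he ?_
      have := hI0 e
      grind
    · exact hS1 z hz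
  push Not at hA
  rw [cnt_eq_zero] at hA
  -- if `f` is now the only edge of colour `c'` at `y`, then `y` has traded `c` for `c'`
  by_cases hB : ∃ g ∈ inc y, g ≠ f ∧ m1 g = c'
  swap
  · left
    refine ⟨m1, fun z => ?_, hx1⟩
    by_cases hz : z = y
    · subst hz
      apply miss_le_swap c c'
      intro d hd
      obtain ⟨e, he, hed⟩ := cnt_ne_zero.1 hd
      by_cases hdc : d = c
      · subst hdc; simp only [Equiv.swap_apply_left]
        exact cnt_pos hfy hc'
      by_cases hdc' : d = c'
      · exfalso
        apply hB
        refine ⟨e, he, ?_, ?_⟩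
        · rintro rfl; exact hcc (by rw [← hc, hed, hdc'])
        · have := hI3 e he
          grind
      rw [Equiv.swap_apply_of_ne_of_ne hdc hdc']
      refine cnt_pos he ?_
      have := hI0 e
      grind
    · exact hS1 z hz
  obtain ⟨g, hgy, hgf, hg⟩ := hB
  have hgm : m g = c' := by
    have := hI3 g hgy
    grind
  set m2 := Function.update m1 g c with hm2
  have hm2g : m2 g = c := by simp [hm2]
  have hm2o : ∀ e, e ≠ g → m2 e = m1 e := fun e he => by simp [hm2, he]
  have hI0' : ∀ e, m2 e = m e ∨ (m e = a ∧ m2 e = b) ∨ (m e = b ∧ m2 e = a) := by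
    intro e
    by_cases he : e = g
    · subst he; rw [hm2g, hgm]; grind
    · rw [hm2o e he]; exact hI0 e
  have hy2 : ∀ d, cnt inc m2 y d = cnt inc m y d := by
    apply cnt_swap hfy hgy
    · rw [hm2o f hgf.symm, hc', hgm]
    · rw [hm2g, hc]
    · intro e he h1 h3
      rw [hm2o e h3]
      by_contra h
      exact h1 (hI3 e he h)
  have hgood : ∀ z, g ∉ inc z → miss inc m2 z ≤ miss inc m z := by
    intro z hz
    rw [miss_congr (cnt_congr (m := m1) (fun e he => hm2o e (fun h => hz (h ▸ he))))]
    exact hS1 z (fun h => hz (h ▸ hgy))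
  have hx2 : g ∉ inc x → miss inc m2 x < miss inc m x := by
    intro hz
    rw [miss_congr (cnt_congr (m := m1) (fun e he => hm2o e (fun h => hz (h ▸ he))))]
    exact hx1
  -- if `g` is a loop at `y`, the trail ends with it
  by_cases hC : ∃ z, z ≠ y ∧ g ∈ inc z
  swap
  · left
    push Not at hC
    refine ⟨m2, fun z => ?_, hx2 (hC x hyx.symm)⟩
    by_cases hz : z = y
    · rw [hz]; exact (miss_congr hy2).le
    · exact hgood z (hC z hz)
  obtain ⟨z, hzy, hgz⟩ := hC
  have hother : ∀ z', z' ≠ y → z' ≠ z → g ∉ inc z' := by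
    intro z' h1 h3 h4
    rcases h2 g y z z' hgy hgz h4 hzy.symm with h | h <;> contradiction
  -- a trail returning to `x` does so with colour `a`, and a third edge of colour `a` is harmless
  by_cases hzx : z = x
  · subst hzx
    have hca : c' = a := by
      have := cnt_eq_zero.1 hxb g hgz
      grind
    have hcb : c = b := by grind
    have hgv : g ≠ v := by
      rintro rfl
      rw [hca] at hg; rw [hg] at hvb; exact hab hvb
    by_cases h3 : 3 ≤ cnt inc m z a
    · left
      refine ⟨m2, fun w => ?_, ?_⟩
      swap
      · apply miss_lt (b := b) _ hxb (cnt_pos hgz (hm2g.trans hcb))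
        intro d hd
        by_cases hda : d = a
        · obtain ⟨g', hg', hg1, hg2, hg3⟩ := exists_ne_of_three_le h3 v g
          refine cnt_pos hg' ?_
          rw [hm2o g' hg2]
          have := hI5 g' hg'
          grind
        · obtain ⟨e, he, hec⟩ := cnt_ne_zero.1 hd
          refine cnt_pos he ?_
          have := hI0' e
          grind
      · by_cases hw : w = y
        · rw [hw]; exact (miss_congr hy2).le
        by_cases hwz : w = z
        · subst hwz
          apply miss_le
          intro d hd
          by_cases hda : d = a
          · obtain ⟨g', hg', hg1, hg2, hg3⟩ := exists_ne_of_three_le h3 v g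
            refine cnt_pos hg' ?_
            rw [hm2o g' hg2]
            have := hI5 g' hg'
            grind
          · obtain ⟨e, he, hec⟩ := cnt_ne_zero.1 hd
            refine cnt_pos he ?_
            have := hI0' e
            grind
        · exact hgood w (hother w hw hwz)
    · right
      refine ⟨by omega, m2, ?_, ?_, ?_⟩
      · intro e h1 h3
        have := hI0' e
        tauto
      · intro w hw d
        by_cases hwy : w = y
        · rw [hwy]; exact hy2 d
        have hgw := hother w hwy hw
        rw [cnt_congr (m := m1) (fun e he => hm2o e (fun h => hgw (h ▸ he)))]
        by_cases hwS : w ∈ S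
        · exact (hI4 w hwS hw).1 d
        · apply cnt_congr
          intro e he
          by_contra h
          rcases hI2 e w h he with h | h <;> contradiction
      · intro e he
        have hset : (inc z).filter (fun e => m e = a) = {v, g} := by
          symm
          apply Finset.eq_of_subset_of_card_le
          · intro e'
            simp only [Finset.mem_insert, Finset.mem_singleton, Finset.mem_filter]
            rintro (rfl | rfl)
            · exact ⟨hv, hva⟩
            · exact ⟨hgz, hgm.trans hca⟩
          · rw [Finset.card_pair hgv.symm]
            have : cnt inc m z a ≤ 2 := by omega
            exact this
        by_cases hea : m e = a
        · rw [if_pos hea]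
          have : e ∈ (inc z).filter (fun e => m e = a) := by simp [he, hea]
          rw [hset] at this
          simp only [Finset.mem_insert, Finset.mem_singleton] at this
          rcases this with rfl | rfl
          · rw [hm2o _ hgv.symm, hvb]
          · rw [hm2g, hcb]
        · rw [if_neg hea]
          have h1 := hI5 e he
          have h3 := cnt_eq_zero.1 hxb e he
          have := hI0' e
          tauto
  have hgx : g ∉ inc x := hother x hyx.symm (Ne.symm hzx)
  -- changing a further edge at a node already passed preserves both colours of the trail there
  by_cases hzS : z ∈ S
  · left
    refine ⟨m2, fun w => ?_, hx2 hgx⟩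
    by_cases hw : w = y
    · rw [hw]; exact (miss_congr hy2).le
    by_cases hwz : w = z
    · subst hwz
      obtain ⟨-, ⟨e, he, he1, hea⟩, ⟨e', he', he1', heb⟩⟩ := hI4 w hzS hzx
      have hgc : m1 g = m g := hg.trans hgm.symm
      apply miss_le
      intro d hd
      by_cases hda : d = a
      · refine cnt_pos he ?_
        rw [hm2o e (by rintro rfl; exact he1 hgc), hea, hda]
      by_cases hdb : d = b
      · refine cnt_pos he' ?_
        rw [hm2o e' (by rintro rfl; exact he1' hgc), heb, hdb]
      obtain ⟨e0, he0, hed⟩ := cnt_ne_zero.1 hd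
      refine cnt_pos he0 ?_
      have := hI0' e0
      grind
    · exact hgood w (hother w hw hwz)
  · -- extend the trail
    have hchg : ∀ e, m2 e ≠ m e → m1 e ≠ m e ∨ e = g := by
      intro e he
      by_cases h : e = g
      · exact Or.inr h
      · rw [hm2o e h] at he; exact Or.inl he
    refine ih ((insert y S)ᶜ).card ?_ (insert y S) m2 z g rfl hI0' (by simp [hxS]) ?_ ?_ ?_ ?_
      hgz ?_ hva ?_ ?_
    · rw [← hn]
      apply Finset.card_lt_card
      rw [Finset.compl_ssubset_compl]
      exact Finset.ssubset_insert hyS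
    · simp [hzy, hzS]
    · intro e w he hew
      rcases hchg e he with h | rfl
      · rcases hI2 e w h hew with h | h <;> simp [h]
      · by_cases hw : w = z
        · exact Or.inr hw
        · by_cases hw' : w = y
          · simp [hw']
          · exact absurd hew (hother w hw' hw)
    · intro e he h
      rcases hchg e h with h | h
      · rcases hI2 e z h he with h | h <;> contradiction
      · exact h
    · rw [hm2g, hgm]; exact hcc
    · intro w hw hwx
      by_cases hwy : w = y
      · subst hwy
        refine ⟨hy2, ?_⟩
        have e1 : ∃ e ∈ inc w, m2 e ≠ m e ∧ m2 e = c := ⟨g, hgy, by rw [hm2g, hgm]; exact hcc, hm2g⟩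
        have e2 : ∃ e ∈ inc w, m2 e ≠ m e ∧ m2 e = c' := by
          refine ⟨f, hfy, ?_, ?_⟩
          · rw [hm2o f hgf.symm]; exact hf
          · rw [hm2o f hgf.symm]; exact hc'
        rcases hsw with ⟨rfl, rfl⟩ | ⟨rfl, rfl⟩
        · exact ⟨e1, e2⟩
        · exact ⟨e2, e1⟩
      · have hwS : w ∈ S := by simpa [hwy] using hw
        have hgw := hother w hwy (fun h => hzS (h ▸ hwS))
        obtain ⟨h1, ⟨e, he, he1, hea⟩, ⟨e', he', he1', heb⟩⟩ := hI4 w hwS hwx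
        refine ⟨fun d => ?_, ⟨e, he, ?_⟩, ⟨e', he', ?_⟩⟩
        · rw [cnt_congr (m := m1) (fun e he => hm2o e (fun h => hgw (h ▸ he))), h1 d]
        · rw [hm2o e (fun h => hgw (h ▸ he))]; exact ⟨he1, hea⟩
        · rw [hm2o e' (fun h => hgw (h ▸ he'))]; exact ⟨he1', heb⟩
    · rw [hm2o v (by rintro rfl; exact hgx hv)]; exact hvb
    · intro e he h
      rcases hchg e h with h | rfl
      · exact hI5 e he h
      · exact absurd he hgx


/-- Kempe exchange: if `x` misses `b` and sees `a` at least twice, then either some colouring is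
`Better`, or `a` is seen exactly twice and an exchange turns both of these edges into `b`. -/
lemma trail [Fintype N] [DecidableEq N] (h2 : AtMostTwo inc) {a b : Fin 3} (hab : a ≠ b)
    (hxb : cnt inc m x b = 0) (hxa : 2 ≤ cnt inc m x a) :
    (∃ m', Better inc m m' x) ∨ (cnt inc m x a = 2 ∧ ∃ m', Flipped inc m m' x a b) := by
  obtain ⟨v, hv, hva⟩ := cnt_ne_zero.1 (by omega : cnt inc m x a ≠ 0)
  set m1 := Function.update m v b with hm1
  have hm1v : m1 v = b := by simp [hm1]
  have hm1o : ∀ e, e ≠ v → m1 e = m e := fun e he => by simp [hm1, he]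
  have hch : ∀ e, m1 e ≠ m e → e = v := fun e he => by_contra fun h => he (hm1o e h)
  by_cases hC : ∃ y, y ≠ x ∧ v ∈ inc y
  · obtain ⟨y, hyx, hy⟩ := hC
    refine trail_aux h2 hab hv hxb hxa _ {x} m1 y v rfl ?_ (by simp) (by simpa using hyx) ?_ ?_ ?_
      hy ?_ hva hm1v (fun e _ h => hch e h)
    · intro e
      by_cases he : e = v
      · subst he; exact Or.inr (Or.inl ⟨hva, hm1v⟩)
      · exact Or.inl (hm1o e he)
    · intro e z he hz
      obtain rfl := hch e he
      simpa using h2 e x y z hv hy hz hyx.symm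
    · exact fun e _ h => hch e h
    · rw [hm1v, hva]; exact hab.symm
    · intro z hz hzx
      exact absurd (by simpa using hz) hzx
  · left
    push Not at hC
    have hx : miss inc m1 x < miss inc m x := by
      apply miss_lt (b := b) _ hxb (cnt_pos hv hm1v)
      intro c hc
      by_cases hca : c = a
      · obtain ⟨g, hg, hgv, hga⟩ := exists_ne_of_two_le hxa v
        exact cnt_pos hg (by rw [hm1o g hgv, hga, hca])
      · obtain ⟨e, he, hec⟩ := cnt_ne_zero.1 hc
        exact cnt_pos he (by rw [hm1o e (by rintro rfl; exact hca (hec ▸ hva)), hec])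
    refine ⟨m1, fun z => ?_, hx⟩
    by_cases hz : z = x
    · rw [hz]; exact hx.le
    · exact (miss_congr (cnt_congr (fun e he => hm1o e (fun h => hC z hz (h ▸ he))))).le

/-- The cost of a colour missing at `x`: cheaper at a node with exactly three edges, since such
deficiencies may remain at an optimum. -/
def weight (inc : N → Finset E) (x : N) : ℕ := if (inc x).card = 3 then 1 else 2

/-- The weighted number of missing colours, minimized in `exists_good_coloring`. -/
def penalty [Fintype N] (inc : N → Finset E) (m : E → Fin 3) : ℕ :=
  ∑ x, weight inc x * miss inc m x

omit [DecidableEq E] in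
lemma weight_pos (x : N) : 0 < weight inc x := by unfold weight; split_ifs <;> norm_num

omit [DecidableEq E] in
lemma Better.penalty_lt [Fintype N] (h : Better inc m m' x) : penalty inc m' < penalty inc m := by
  apply Finset.sum_lt_sum
  · exact fun y _ => Nat.mul_le_mul_left _ (h.1 y)
  · exact ⟨x, Finset.mem_univ _, Nat.mul_lt_mul_of_pos_left h.2 (weight_pos x)⟩

lemma third (a b : Fin 3) : ∃ c, c ≠ a ∧ c ≠ b := by revert a b; decide

lemma fin3_cases {a b c : Fin 3} (h1 : a ≠ b) (h2 : a ≠ c) (h3 : b ≠ c) (d : Fin 3) :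
    d = a ∨ d = b ∨ d = c := by revert a b c d; decide

omit [DecidableEq E] in
lemma card_eq_cnt {a b c : Fin 3} (h1 : a ≠ b) (h2 : a ≠ c) (h3 : b ≠ c) :
    (inc x).card = cnt inc m x a + cnt inc m x b + cnt inc m x c := by
  have : (inc x).card = ∑ d : Fin 3, cnt inc m x d :=
    Finset.card_eq_sum_card_fiberwise (fun _ _ => Finset.mem_univ _)
  rw [this, ← Finset.sum_subset (Finset.subset_univ {a, b, c})]
  · rw [Finset.sum_insert (by simp [h1, h2]), Finset.sum_pair h3]; ring
  · intro d _ hd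
    have := fin3_cases h1 h2 h3 d
    simp at hd; tauto

omit [DecidableEq E] in
lemma miss_eq {a b c : Fin 3} (h1 : a ≠ b) (h2 : a ≠ c) (h3 : b ≠ c) :
    miss inc m x = (if cnt inc m x a = 0 then 1 else 0) + (if cnt inc m x b = 0 then 1 else 0) +
      (if cnt inc m x c = 0 then 1 else 0) := by
  unfold miss
  rw [Finset.card_filter, ← Finset.sum_subset (Finset.subset_univ {a, b, c})]
  · rw [Finset.sum_insert (by simp [h1, h2]), Finset.sum_pair h3]; ring
  · intro d _ hd
    have := fin3_cases h1 h2 h3 d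
    simp at hd; tauto

lemma optimal_le_two [Fintype N] [DecidableEq N] (h2 : AtMostTwo inc)
    (hm : ∀ m', penalty inc m ≤ penalty inc m') {a b : Fin 3} (hab : a ≠ b)
    (hxb : cnt inc m x b = 0) : cnt inc m x a ≤ 2 := by
  by_contra h
  rcases trail h2 hab hxb (by omega) with ⟨m', h'⟩ | ⟨h', -⟩
  · exact absurd h'.penalty_lt (hm m').not_gt
  · omega

/-- Recolouring `e` with `b` repairs `x`, so it must damage the other endpoint `y` of `e`. Hence `e`
is the only edge of colour `a` at `y`, and `b` was present there. If `b` occurred more than once, the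
damage could be repaired by a Kempe exchange from `y`, since `a` is missing and `b` is seen at
least three times. -/
lemma optimal_neighbour [Fintype N] [DecidableEq N] (h2 : AtMostTwo inc)
    (hm : ∀ m', penalty inc m ≤ penalty inc m') {a b : Fin 3} (hab : a ≠ b)
    (hxb : cnt inc m x b = 0) (hxa : cnt inc m x a = 2) {e : E} (he : e ∈ inc x) (hea : m e = a) :
    ∃ y, y ≠ x ∧ e ∈ inc y ∧ cnt inc m y a = 1 ∧ cnt inc m y b = 1 := by
  set m1 := Function.update m e b with hm1
  have nb : ∀ m' z, ¬ Better inc m m' z := fun m' z h => absurd h.penalty_lt (hm m').not_gt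
  obtain ⟨c, hca, hcb⟩ := third a b
  have cx : cnt inc m1 x a + 1 = cnt inc m x a := cnt_update_old he hea hab.symm
  have cx' : cnt inc m1 x b = cnt inc m x b + 1 := cnt_update_self he (by rw [hea]; exact hab) rfl
  have cx'' : cnt inc m1 x c = cnt inc m x c :=
    cnt_update_other (Or.inr ⟨by rw [hea]; exact hca.symm, hcb.symm⟩)
  have hx : miss inc m1 x < miss inc m x := by
    rw [miss_eq hab hca.symm hcb.symm, miss_eq hab hca.symm hcb.symm, cx'', cx', hxb]
    split_ifs <;> first | contradiction | omega
  have hoth : ∀ z, e ∉ inc z → miss inc m1 z = miss inc m z := fun z hz =>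
    miss_congr (fun d => cnt_update_other (Or.inl hz))
  by_cases hC : ∃ y, y ≠ x ∧ e ∈ inc y
  swap
  · push Not at hC
    refine absurd ⟨fun z => ?_, hx⟩ (nb m1 x)
    by_cases hz : z = x
    · rw [hz]; exact hx.le
    · exact (hoth z (hC z hz)).le
  obtain ⟨y, hyx, hy⟩ := hC
  have hoth' : ∀ z, z ≠ y → miss inc m1 z ≤ miss inc m z := by
    intro z hz
    by_cases hzx : z = x
    · rw [hzx]; exact hx.le
    refine (hoth z fun hez => ?_).le
    rcases h2 e x y z he hy hez hyx.symm with h | h <;> contradiction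
  have cy : cnt inc m1 y a + 1 = cnt inc m y a := cnt_update_old hy hea hab.symm
  have cy' : cnt inc m1 y b = cnt inc m y b + 1 := cnt_update_self hy (by rw [hea]; exact hab) rfl
  have cy'' : cnt inc m1 y c = cnt inc m y c :=
    cnt_update_other (Or.inr ⟨by rw [hea]; exact hca.symm, hcb.symm⟩)
  have hlt : miss inc m y < miss inc m1 y := by
    by_contra h
    refine nb m1 x ⟨fun z => ?_, hx⟩
    by_cases hz : z = y
    · rw [hz]; omega
    · exact hoth' z hz
  have hmm : miss inc m1 y ≤ miss inc m y + 1 ∧ cnt inc m1 y a = 0 ∧ cnt inc m y b ≠ 0 := by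
    rw [miss_eq hab hca.symm hcb.symm, miss_eq hab hca.symm hcb.symm, cy'', cy'] at hlt ⊢
    split_ifs at hlt ⊢ <;> first | contradiction | omega
  refine ⟨y, hyx, hy, by omega, ?_⟩
  by_contra hne
  rcases trail (x := y) (m := m1) h2 hab.symm hmm.2.1 (by omega) with ⟨m', h'⟩ | ⟨h', -⟩
  · refine nb m' x ⟨fun z => ?_, (h'.1 x).trans_lt hx⟩
    by_cases hz : z = y
    · have := h'.2; rw [hz]; omega
    · exact (h'.1 z).trans (hoth' z hz)
  · omega

/-- If two colours `a`, `a'` were each seen twice at `x`, first exchange `a'` and `b` there by a Kempe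
trail, then recolour an `a`-edge `e` with `a'`. This repairs `x` and moves the deficiency to the
other endpoint `y` of `e`, where only `a` is now missing. If `y` missed `a'` before, nothing is lost
at `y`. Otherwise either `a` is restored at `y` by a further trail, or `y` has exactly three edges and
the penalty has dropped because `x` has four. -/
lemma optimal_not_two_two [Fintype N] [DecidableEq N] (h2 : AtMostTwo inc)
    (hm : ∀ m', penalty inc m ≤ penalty inc m') {a a' b : Fin 3} (hab : a ≠ b) (hab' : a' ≠ b)
    (haa : a ≠ a') (hxb : cnt inc m x b = 0) (hxa : cnt inc m x a = 2) :
    cnt inc m x a' ≠ 2 := by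
  intro hxa'
  have nb : ∀ m' z, ¬ Better inc m m' z := fun m' z h => absurd h.penalty_lt (hm m').not_gt
  obtain ⟨e, he, hea⟩ := cnt_ne_zero.1 (by omega : cnt inc m x a ≠ 0)
  obtain ⟨y, hyx, hy, hya, hyb⟩ := optimal_neighbour h2 hm hab hxb hxa he hea
  rcases trail (x := x) (m := m) h2 hab' hxb (by omega) with ⟨m', h'⟩ | ⟨-, m1, f1, f2, f3⟩
  · exact nb m' x h'
  have hm1e : m1 e = a := by rw [f1 e (by rw [hea]; exact haa) (by rw [hea]; exact hab), hea]
  set M2 := Function.update m1 e a' with hM2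
  have hxm : miss inc m x = 1 := by
    rw [miss_eq hab haa hab'.symm]; simp [hxb, hxa, hxa']
  have c1a : 2 ≤ cnt inc m1 x a := by
    rw [← hxa]
    apply Finset.card_le_card
    intro e'
    simp only [Finset.mem_filter]
    rintro ⟨h, h'⟩
    refine ⟨h, ?_⟩
    rw [f3 e' h, if_neg (by rw [h']; exact haa), h']
  have c2a : cnt inc M2 x a + 1 = cnt inc m1 x a := cnt_update_old he hm1e haa.symm
  have c2b : cnt inc M2 x b ≠ 0 := by
    obtain ⟨g, hg, hga⟩ := cnt_ne_zero.1 (by omega : cnt inc m x a' ≠ 0)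
    have : m1 g = b := by rw [f3 g hg, if_pos hga]
    refine cnt_pos hg ?_
    rw [hM2, Function.update_of_ne _ _ _, this]
    rintro rfl
    exact hab (hm1e ▸ this)
  have c2a' : cnt inc M2 x a' ≠ 0 := cnt_pos he (by simp [hM2])
  have hx0 : miss inc M2 x = 0 := by
    rw [miss_eq hab haa hab'.symm, if_neg c2b, if_neg c2a', if_neg (by omega)]
  have hoth : ∀ z, z ≠ x → z ≠ y → miss inc M2 z = miss inc m z := by
    intro z hzx hzy
    apply miss_congr
    intro d
    rw [cnt_update_other, f2 z hzx]
    left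
    intro hez
    rcases h2 e x y z he hy hez hyx.symm with h | h <;> contradiction
  have ya : cnt inc M2 y a + 1 = cnt inc m y a := by
    rw [← f2 y hyx]; exact cnt_update_old hy hm1e haa.symm
  have ya' : cnt inc M2 y a' = cnt inc m y a' + 1 := by
    rw [← f2 y hyx]; exact cnt_update_self hy (by rw [hm1e]; exact haa) rfl
  have yb : cnt inc M2 y b = cnt inc m y b := by
    rw [← f2 y hyx]
    exact cnt_update_other (Or.inr ⟨by rw [hm1e]; exact hab, hab'⟩)
  have my : miss inc m y = if cnt inc m y a' = 0 then 1 else 0 := by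
    rw [miss_eq hab haa hab'.symm, hya, hyb]; simp
  have my2 : miss inc M2 y = 1 := by
    rw [miss_eq hab haa hab'.symm, yb, hyb, ya', if_pos (by omega)]; simp
  by_cases h0 : cnt inc m y a' = 0
  · refine nb M2 x ⟨fun z => ?_, by omega⟩
    by_cases hzx : z = x
    · rw [hzx]; omega
    by_cases hzy : z = y
    · rw [hzy, my, if_pos h0, my2]
    · exact (hoth z hzx hzy).le
  rw [if_neg h0] at my
  by_cases h1 : cnt inc m y a' = 1
  · -- the deficiency has moved to a node with only three edges
    have wy : weight inc y = 1 := by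
      unfold weight
      rw [card_eq_cnt (m := m) (x := y) hab haa hab'.symm, hya, hyb, h1]; simp
    have wx : weight inc x = 2 := by
      unfold weight
      rw [card_eq_cnt (m := m) (x := x) hab haa hab'.symm, hxa, hxb, hxa']; simp
    have := hm M2
    unfold penalty at this
    rw [← Finset.add_sum_erase _ _ (Finset.mem_univ x),
      ← Finset.add_sum_erase _ _ (Finset.mem_univ x),
      ← Finset.add_sum_erase _ _ (Finset.mem_erase.2 ⟨hyx, Finset.mem_univ y⟩),
      ← Finset.add_sum_erase _ _ (Finset.mem_erase.2 ⟨hyx, Finset.mem_univ y⟩)] at this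
    have hs : ∑ z ∈ (Finset.univ.erase x).erase y, weight inc z * miss inc M2 z =
        ∑ z ∈ (Finset.univ.erase x).erase y, weight inc z * miss inc m z := by
      apply Finset.sum_congr rfl
      intro z hz
      simp only [Finset.mem_erase] at hz
      rw [hoth z hz.2.1 hz.1]
    rw [hs, wx, wy, my, my2, hxm, hx0] at this
    omega
  · rcases trail (x := y) (m := M2) (a := a') (b := a) h2 haa.symm (by omega) (by omega) with
      ⟨m', h'⟩ | ⟨h', -⟩
    · have h3 := h'.2
      refine nb m' x ⟨fun z => ?_, ?_⟩
      · have h4 := h'.1 z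
        by_cases hzx : z = x
        · rw [hzx] at h4 ⊢; omega
        by_cases hzy : z = y
        · rw [hzy]; omega
        · rw [hoth z hzx hzy] at h4; exact h4
      · have := h'.1 x; omega
    · omega

/-- If every edge meets at most two nodes and every node at least three edges, some 3-colouring is
seen completely by all nodes, except for nodes with three edges where one colour occurs twice, on
edges that are the unique ones of their colour at their other ends. -/
theorem exists_good_coloring [Fintype N] [DecidableEq N] (h2 : AtMostTwo inc)
    (h3 : ∀ x, 3 ≤ (inc x).card) :
    ∃ m : E → Fin 3, ∀ x, (∀ c, ∃ e ∈ inc x, m e = c) ∨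
      ((inc x).card = 3 ∧ ∃ a, cnt inc m x a = 2 ∧
        ∀ e ∈ inc x, m e = a → ∃ y, y ≠ x ∧ e ∈ inc y ∧ cnt inc m y a = 1) := by
  obtain ⟨m, hm⟩ : ∃ m, ∀ m', penalty inc m ≤ penalty inc m' :=
    ⟨Function.argmin (penalty (E := E) inc),
      fun m' => not_lt.1 (Function.not_lt_argmin (penalty (E := E) inc) m')⟩
  refine ⟨m, fun x => ?_⟩
  by_cases hb : ∃ b, cnt inc m x b = 0
  swap
  · push Not at hb
    exact Or.inl fun c => cnt_ne_zero.1 (hb c)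
  right
  obtain ⟨b, hb⟩ := hb
  -- `key` treats the case in which `a` is the colour seen twice
  have key : ∀ a a', a ≠ b → a' ≠ b → a ≠ a' → cnt inc m x a = 2 →
      (inc x).card = 3 ∧ ∃ a, cnt inc m x a = 2 ∧
        ∀ e ∈ inc x, m e = a → ∃ y, y ≠ x ∧ e ∈ inc y ∧ cnt inc m y a = 1 := by
    intro a a' hab hab' haa ha
    have h1 := optimal_not_two_two h2 hm hab hab' haa hb ha
    have h4 := optimal_le_two h2 hm hab' hb
    have h5 := h3 x
    rw [card_eq_cnt (m := m) (x := x) hab haa hab'.symm] at h5 ⊢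
    refine ⟨by omega, a, ha, fun e he hea => ?_⟩
    obtain ⟨y, hy1, hy2, hy3, -⟩ := optimal_neighbour h2 hm hab hb ha he hea
    exact ⟨y, hy1, hy2, hy3⟩
  obtain ⟨a, hab, -⟩ := third b b
  obtain ⟨a', haa, hab'⟩ := third a b
  have h4 := optimal_le_two h2 hm hab hb
  have h5 := optimal_le_two h2 hm hab' hb
  have h6 := h3 x
  rw [card_eq_cnt (m := m) (x := x) hab haa.symm hab'.symm] at h6
  by_cases ha : cnt inc m x a = 2
  · exact key a a' hab hab' haa.symm ha
  · exact key a' a hab' hab haa (by omega)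

end Cover

/-! ### Orientation of the cycle cover and the mate function -/

/-- A cycle cover can be oriented. A system of distinct representatives assigns to each vertex one of
its two edges, and the vertex is sent to the other end of that edge. -/
lemma exists_successor {V : Type*} [Fintype V] [DecidableEq V] {C : Finset (Sym2 V)}
    (hC : IsCycleCoverEdges C) :
    ∃ σ : Equiv.Perm V, (∀ v, σ v ≠ v) ∧ (∀ v, σ (σ v) ≠ v) ∧
      ∀ e, e ∈ C ↔ ∃ v, e = s(v, σ v) := by
  classical
  obtain ⟨hdiag, hdeg⟩ := hC
  set t : V → Finset (Sym2 V) := fun v => C.filter (fun e => v ∈ e) with ht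
  have htc : ∀ v, (t v).card = 2 := by
    intro v
    rw [← hdeg v, ← Set.ncard_coe_finset]
    congr 1
    ext e; simp [ht]
  have hall : ∀ S : Finset V, S.card ≤ (S.biUnion t).card := by
    intro S
    have := Finset.card_mul_le_card_mul (s := S) (t := S.biUnion t) (m := 2) (n := 2)
      (fun v e => v ∈ e) ?_ ?_
    · omega
    · intro v hv
      rw [← htc v]
      apply Finset.card_le_card
      intro e he
      simp only [Finset.bipartiteAbove, Finset.mem_filter, Finset.mem_biUnion]
      exact ⟨⟨v, hv, he⟩, (Finset.mem_filter.1 he).2⟩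
    · intro e _
      induction e using Sym2.ind with
      | _ p q =>
        refine (Finset.card_le_card (t := {p, q}) ?_).trans Finset.card_le_two
        intro v
        simp [Finset.bipartiteBelow]
  obtain ⟨f, hfi, hf⟩ := (Finset.all_card_le_biUnion_card_iff_exists_injective t).1 hall
  have hfC : ∀ v, f v ∈ C := fun v => (Finset.mem_filter.1 (hf v)).1
  have hfv : ∀ v, v ∈ f v := fun v => (Finset.mem_filter.1 (hf v)).2
  choose τ hτ using fun v => Sym2.mem_iff_exists.1 (hfv v)
  have hne : ∀ v, τ v ≠ v := by
    intro v h
    apply hdiag _ (hfC v)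
    rw [hτ, h]; simp
  -- the two edges at `w` are known as soon as two of them are named
  have htwo : ∀ w e₁ e₂ e₃, e₁ ∈ t w → e₂ ∈ t w → e₃ ∈ t w → e₁ ≠ e₂ → e₃ = e₁ ∨ e₃ = e₂ := by
    intro w e₁ e₂ e₃ h1 h2 h3 h12
    have : ({e₁, e₂} : Finset (Sym2 V)) = t w := by
      apply Finset.eq_of_subset_of_card_le
      · intro e; simp only [Finset.mem_insert, Finset.mem_singleton]
        rintro (rfl | rfl) <;> assumption
      · rw [htc, Finset.card_pair h12]
    rw [← this] at h3
    simpa using h3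
  have hmem : ∀ v, f v ∈ t (τ v) := fun v => by
    simp only [ht, Finset.mem_filter]
    exact ⟨hfC v, by rw [hτ v]; simp⟩
  have hinj : Function.Injective τ := by
    intro u v h
    by_contra huv
    rcases htwo (τ u) (f u) (f v) (f (τ u)) (hmem u) (h ▸ hmem v) (hf _) (hfi.ne huv) with h' | h'
    · exact hne u (hfi h')
    · exact hne v (h ▸ hfi h')
  refine ⟨Equiv.ofBijective τ (Finite.injective_iff_bijective.1 hinj), hne, ?_, ?_⟩
  · intro v hv
    simp only [Equiv.ofBijective_apply] at hv
    have : f (τ v) = f v := by rw [hτ (τ v), hτ v, hv, Sym2.eq_swap]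
    exact hne v (hfi this)
  · intro e
    simp only [Equiv.ofBijective_apply]
    constructor
    · intro he
      induction e using Sym2.ind with
      | _ p q =>
        obtain ⟨u, rfl⟩ := (Finite.injective_iff_surjective.1 hinj) p
        rcases htwo (τ u) (f (τ u)) (f u) s(τ u, q) (hf _) (hmem u) (by simp [ht, he])
          (fun h => hne u (hfi h)) with h | h
        · exact ⟨τ u, h.trans (hτ _)⟩
        · exact ⟨u, h.trans (hτ _)⟩
    · rintro ⟨v, rfl⟩
      exact hτ v ▸ hfC v

lemma exists_mate {V : Type*} {M : Finset (Sym2 V)} (hM : IsPerfectMatchingEdges M) :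
    ∃ μ : V → V, (∀ v, μ v ≠ v) ∧ (∀ v, μ (μ v) = v) ∧ ∀ e, e ∈ M ↔ ∃ v, e = s(v, μ v) := by
  obtain ⟨hdiag, hex⟩ := hM
  have h1 : ∀ v, ∃ w, s(v, w) ∈ M := by
    intro v
    obtain ⟨e, ⟨he, hv⟩, -⟩ := hex v
    obtain ⟨w, rfl⟩ := Sym2.mem_iff_exists.1 hv
    exact ⟨w, he⟩
  choose μ hμ using h1
  have hu : ∀ v w, s(v, w) ∈ M → w = μ v := by
    intro v w h
    have := (hex v).unique ⟨h, by simp⟩ ⟨hμ v, by simp⟩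
    exact Sym2.congr_right.1 this
  refine ⟨μ, fun v h => ?_, fun v => ?_, fun e => ⟨fun he => ?_, ?_⟩⟩
  · exact hdiag _ (hμ v) (by rw [h]; simp)
  · exact (hu (μ v) v (by rw [Sym2.eq_swap]; exact hμ v)).symm
  · induction e using Sym2.ind with
    | _ p q => exact ⟨p, by rw [← hu p q he]⟩
  · rintro ⟨v, rfl⟩; exact hμ v

/-! ### From labels to a path-3-coloring -/

/-- A graph in which no nonempty vertex set induces minimum degree at least two is acyclic. -/
lemma isAcyclic_of_no_core {V : Type*} {G : SimpleGraph V}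
    (h : ∀ S : Set V, S.Nonempty →
      ¬ ∀ v ∈ S, ∃ a b, a ≠ b ∧ a ∈ S ∧ b ∈ S ∧ G.Adj v a ∧ G.Adj v b) : G.IsAcyclic := by
  intro v p hp
  refine h {u | u ∈ p.support} ⟨v, p.start_mem_support⟩ fun u hu => ?_
  have h2 := hp.ncard_neighborSet_toSubgraph_eq_two hu
  obtain ⟨a, b, hab, hs⟩ := Set.ncard_eq_two.1 h2
  have ha : p.toSubgraph.Adj u a := by
    rw [← SimpleGraph.Subgraph.mem_neighborSet, hs]; simp
  have hb : p.toSubgraph.Adj u b := by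
    rw [← SimpleGraph.Subgraph.mem_neighborSet, hs]; simp
  exact ⟨a, b, hab, p.mem_verts_toSubgraph.1 ha.snd_mem, p.mem_verts_toSubgraph.1 hb.snd_mem,
    ha.adj_sub, hb.adj_sub⟩

/-- Labels yield a path-3-coloring: each `{v, σ v}` receives the two colours other than `ℓ v`, and each
`{v, μ v}` the colour `k v`. The hypothesis `hP` controls the exceptional vertices `r`: the matching
edge of colour `k r` at `r` or at its successor leads to a cycle without an exceptional vertex of
that colour. -/
theorem pathColorable_of_labels {V : Type*} [Fintype V] [DecidableEq V] {C M : Finset (Sym2 V)}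
    {σ : Equiv.Perm V} (hσ1 : ∀ v, σ v ≠ v) (hσ2 : ∀ v, σ (σ v) ≠ v)
    (hC : ∀ e, e ∈ C ↔ ∃ v, e = s(v, σ v))
    {μ : V → V} (hμ1 : ∀ v, μ v ≠ v) (hμ2 : ∀ v, μ (μ v) = v)
    (hM : ∀ e, e ∈ M ↔ ∃ v, e = s(v, μ v))
    {ℓ k : V → Fin 3} (hk : ∀ v, k (μ v) = k v)
    (hD : ∀ v, ℓ (σ v) = k (σ v) ∨ ℓ v = k (σ v))
    (hE : ∀ v, μ v = σ v → ℓ v = k v)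
    (hF : ∀ v c, ∃ u, σ.SameCycle v u ∧ ℓ u = c)
    (hP : ∀ r, ℓ r ≠ k r → ∃ z, (z = r ∨ z = σ r) ∧ k z = k r ∧
      ∀ r', σ.SameCycle (μ z) r' → k r' = k r → ℓ r' = k r') :
    PathColorable 3 (fun e => (if e ∈ C then 2 else 0) + (if e ∈ M then 1 else 0)) := by
  classical
  have hσe : ∀ u v, s(u, σ u) = s(v, σ v) → u = v := by
    intro u v h
    rw [Sym2.eq_iff] at h
    rcases h with h | ⟨h1, h2⟩
    · exact h.1
    · exact absurd (h1 ▸ h2) (hσ2 v)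
  have hμe : ∀ u v, s(u, μ u) = s(v, μ v) → k u = k v := by
    intro u v h
    rw [Sym2.eq_iff] at h
    rcases h with h | ⟨h1, h2⟩
    · rw [h.1]
    · rw [h1, hk]
  have hμσ : ∀ u v, s(u, μ u) = s(v, σ v) → k u = ℓ v := by
    intro u v h
    rw [Sym2.eq_iff] at h
    rcases h with ⟨h1, h2⟩ | ⟨h1, h2⟩
    · subst h1; exact (hE u h2).symm
    · rw [hE v (by rw [← h1, ← h2, hμ2]), ← h2, hk]
  let f : Sym2 V → Finset (Fin 3) := fun e => Finset.univ.filter (fun c =>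
    (∃ v, e = s(v, σ v) ∧ ℓ v ≠ c) ∨ ∃ v, e = s(v, μ v) ∧ k v = c)
  have hf : ∀ e c, c ∈ f e ↔ (∃ v, e = s(v, σ v) ∧ ℓ v ≠ c) ∨ ∃ v, e = s(v, μ v) ∧ k v = c := by
    intro e c; simp [f]
  refine ⟨f, ?_, fun c => ?_⟩
  · intro e
    by_cases h1 : e ∈ C <;> by_cases h2 : e ∈ M
    · obtain ⟨v, rfl⟩ := (hC e).1 h1
      obtain ⟨u, hu⟩ := (hM _).1 h2
      have : f s(v, σ v) = Finset.univ := by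
        ext c
        simp only [hf, Finset.mem_univ, iff_true]
        by_cases hc : ℓ v = c
        · exact Or.inr ⟨u, hu, by rw [hμσ u v hu.symm, hc]⟩
        · exact Or.inl ⟨v, rfl, hc⟩
      simp [this, h1, h2]
    · obtain ⟨v, rfl⟩ := (hC e).1 h1
      have : f s(v, σ v) = Finset.univ.erase (ℓ v) := by
        ext c
        simp only [hf, Finset.mem_erase, Finset.mem_univ, and_true]
        constructor
        · rintro (⟨u, hu, hc⟩ | ⟨u, hu, -⟩)
          · rw [hσe v u hu]; exact hc.symm
          · exact absurd ((hM _).2 ⟨u, hu⟩) h2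
        · exact fun h => Or.inl ⟨v, rfl, h.symm⟩
      simp [this, h1, h2]
    · obtain ⟨v, rfl⟩ := (hM e).1 h2
      have : f s(v, μ v) = {k v} := by
        ext c
        simp only [hf, Finset.mem_singleton]
        constructor
        · rintro (⟨u, hu, -⟩ | ⟨u, hu, hc⟩)
          · exact absurd ((hC _).2 ⟨u, hu⟩) h1
          · rw [hμe v u hu, hc]
        · exact fun h => Or.inr ⟨v, rfl, h.symm⟩
      simp [this, h1, h2]
    · have : f e = ∅ := by
        ext c
        simp only [hf, Finset.notMem_empty, iff_false]
        rintro (⟨u, hu, -⟩ | ⟨u, hu, -⟩)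
        · exact h1 ((hC _).2 ⟨u, hu⟩)
        · exact h2 ((hM _).2 ⟨u, hu⟩)
      simp [this, h1, h2]
  set G := SimpleGraph.fromEdgeSet {e | c ∈ f e} with hG
  -- the neighbours of `v` in colour `c`
  have hadj : ∀ v w, G.Adj v w ↔ (w = σ v ∧ ℓ v ≠ c) ∨ (v = σ w ∧ ℓ w ≠ c) ∨ (w = μ v ∧ k v = c) := by
    intro v w
    rw [hG, SimpleGraph.fromEdgeSet_adj, Set.mem_ofPred_eq, hf]
    constructor
    · rintro ⟨⟨u, hu, hc⟩ | ⟨u, hu, hc⟩, -⟩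
      · rw [Sym2.eq_iff] at hu
        rcases hu with ⟨rfl, rfl⟩ | ⟨rfl, rfl⟩
        · exact Or.inl ⟨rfl, hc⟩
        · exact Or.inr (Or.inl ⟨rfl, hc⟩)
      · rw [Sym2.eq_iff] at hu
        rcases hu with ⟨rfl, rfl⟩ | ⟨rfl, rfl⟩
        · exact Or.inr (Or.inr ⟨rfl, hc⟩)
        · exact Or.inr (Or.inr ⟨(hμ2 _).symm, by rw [hk]; exact hc⟩)
    · rintro (⟨rfl, hc⟩ | ⟨rfl, hc⟩ | ⟨rfl, hc⟩)
      · exact ⟨Or.inl ⟨v, rfl, hc⟩, (hσ1 v).symm⟩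
      · exact ⟨Or.inl ⟨w, Sym2.eq_swap, hc⟩, hσ1 w⟩
      · exact ⟨Or.inr ⟨v, rfl, hc⟩, (hμ1 v).symm⟩
  have hdeg : ∀ v, (G.neighborSet v).ncard ≤ 2 := by
    intro v
    have key : ∃ a b, ∀ w, G.Adj v w → w = a ∨ w = b := by
      have hD' := hD (σ.symm v)
      rw [Equiv.apply_symm_apply] at hD'
      have hp : ∀ w, v = σ w → w = σ.symm v := fun w h => by rw [h, Equiv.symm_apply_apply]
      by_cases hc : k v = c
      · rcases hD' with h | h
        · refine ⟨σ.symm v, μ v, fun w hw => ?_⟩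
          rcases (hadj v w).1 hw with ⟨-, h'⟩ | ⟨h', -⟩ | ⟨h', -⟩
          · exact absurd (h.trans hc) h'
          · exact Or.inl (hp w h')
          · exact Or.inr h'
        · refine ⟨σ v, μ v, fun w hw => ?_⟩
          rcases (hadj v w).1 hw with ⟨h', -⟩ | ⟨h', h''⟩ | ⟨h', -⟩
          · exact Or.inl h'
          · exact absurd (h.trans hc) (hp w h' ▸ h'')
          · exact Or.inr h'
      · refine ⟨σ v, σ.symm v, fun w hw => ?_⟩
        rcases (hadj v w).1 hw with ⟨h', -⟩ | ⟨h', -⟩ | ⟨-, h'⟩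
        · exact Or.inl h'
        · exact Or.inr (hp w h')
        · exact absurd h' hc
    obtain ⟨a, b, hab⟩ := key
    refine (Set.ncard_le_ncard (t := {a, b}) (fun w hw => ?_) (Set.toFinite _)).trans
      ((Set.ncard_insert_le a {b}).trans (by rw [Set.ncard_singleton]))
    simpa using hab w hw
  refine ⟨isAcyclic_of_no_core fun S hS hcore => ?_, hdeg⟩
  -- `S` is closed under adjacency, since all degrees are at most two
  have hclosed : ∀ v ∈ S, ∀ w, G.Adj v w → w ∈ S := by
    intro v hv w hw
    obtain ⟨a, b, hab, ha, hb, hva, hvb⟩ := hcore v hv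
    have : ({a, b} : Set V) = G.neighborSet v := by
      apply Set.eq_of_subset_of_ncard_le _ _ (Set.toFinite _)
      · intro x; simp only [Set.mem_insert_iff, Set.mem_singleton_iff]
        rintro (rfl | rfl) <;> assumption
      · rw [Set.ncard_pair hab]; exact hdeg v
    have hw' : w ∈ G.neighborSet v := hw
    rw [← this] at hw'
    rcases hw' with rfl | rfl <;> assumption
  -- the cycle through any vertex of `S` has an exceptional vertex of colour `c` in `S`
  have hback : ∀ v ∈ S, ∃ r ∈ S, σ.SameCycle v r ∧ k r = c ∧ ℓ r ≠ c := by
    intro v hv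
    by_contra hno
    push Not at hno
    -- otherwise `S` contains every predecessor of `v`, and none of them has label `c`,
    -- so that the colour `c` would not occur among the labels of this cycle
    have step : ∀ u ∈ S, σ.SameCycle v u → ℓ (σ.symm u) ≠ c := by
      intro u hu hvu hc
      obtain ⟨a, b, hab, -, -, ha, hb⟩ := hcore u hu
      have h3 : ∀ w, G.Adj u w → (w = σ u ∧ ℓ u ≠ c) ∨ (w = μ u ∧ k u = c) := by
        intro w hw
        rcases (hadj u w).1 hw with h | ⟨h, h'⟩ | h
        · exact Or.inl h
        · rw [h, Equiv.symm_apply_apply] at hc; exact absurd hc h'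
        · exact Or.inr h
      have h4 := hno u hu hvu
      rcases h3 a ha with ⟨h5, h6⟩ | ⟨h5, h6⟩ <;> rcases h3 b hb with ⟨h7, h8⟩ | ⟨h7, h8⟩
      · exact hab (h5.trans h7.symm)
      · exact h6 (h4 h8)
      · exact h8 (h4 h6)
      · exact hab (h5.trans h7.symm)
    have hall : ∀ n : ℕ, (σ.symm ^ n) v ∈ S ∧ σ.SameCycle v ((σ.symm ^ n) v) := by
      intro n
      induction n with
      | zero => exact ⟨hv, Equiv.Perm.SameCycle.refl _ _⟩
      | succ n ih =>
        obtain ⟨h1, h2⟩ := ih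
        rw [pow_succ', Equiv.Perm.mul_apply]
        refine ⟨hclosed _ h1 _ ((hadj _ _).2 (Or.inr (Or.inl ⟨?_, step _ h1 h2⟩))), ?_⟩
        · rw [Equiv.apply_symm_apply]
        · exact Equiv.Perm.sameCycle_symm_apply_right.2 h2
    obtain ⟨u, hu, huc⟩ := hF v c
    have hu' : σ⁻¹.SameCycle v (σ u) := by
      rw [Equiv.Perm.sameCycle_inv]; exact Equiv.Perm.sameCycle_apply_right.2 hu
    obtain ⟨n, hn⟩ := hu'.exists_nat_pow_eq
    have hn' : (σ.symm ^ n) v = σ u := hn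
    have h6 := hall n
    rw [hn'] at h6
    apply step _ h6.1 h6.2
    rw [Equiv.symm_apply_apply, huc]
  obtain ⟨v, hv⟩ := hS
  obtain ⟨r, hr, -, hkr, hlr⟩ := hback v hv
  obtain ⟨z, hz, hkz, hz'⟩ := hP r (by rw [hkr]; exact hlr)
  have hzS : z ∈ S := by
    rcases hz with rfl | rfl
    · exact hr
    · exact hclosed r hr _ ((hadj _ _).2 (Or.inl ⟨rfl, hlr⟩))
  have hμS : μ z ∈ S := hclosed z hzS _ ((hadj _ _).2 (Or.inr (Or.inr ⟨rfl, hkz.trans hkr⟩)))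
  obtain ⟨r', -, hs, hk', hl'⟩ := hback _ hμS
  exact hl' (by rw [hz' r' hs (hk'.trans hkr.symm), hk'])

/-! ### Labels on a single cycle -/

section Labels
variable {V N : Type*} [Fintype V] [DecidableEq V] [DecidableEq N]

/-- The edges of the matching `{v, μ v}` that have an endpoint in the fibre of `π` over `x`; `π`
is meant to send a vertex to the cycle containing it. -/
def incident (μ : V → V) (π : V → N) (x : N) : Finset (Sym2 V) :=
  (Finset.univ.filter (fun v => π v = x)).image (fun v => s(v, μ v))

lemma mem_incident {μ : V → V} {π : V → N} {x : N} {e : Sym2 V} :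
    e ∈ incident μ π x ↔ ∃ v, π v = x ∧ s(v, μ v) = e := by
  simp [incident]

omit [Fintype V] [DecidableEq V] in
lemma edge_eq {μ : V → V} (hμ2 : ∀ v, μ (μ v) = v) {u v : V} :
    s(u, μ u) = s(v, μ v) ↔ u = v ∨ u = μ v := by
  rw [Sym2.eq_iff]
  constructor
  · rintro (h | h)
    · exact Or.inl h.1
    · exact Or.inr h.1
  · rintro (rfl | rfl)
    · exact Or.inl ⟨rfl, rfl⟩
    · exact Or.inr ⟨rfl, hμ2 _⟩

lemma edge_mem_incident {μ : V → V} (hμ2 : ∀ v, μ (μ v) = v) {π : V → N} {x : N} {v : V} :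
    s(v, μ v) ∈ incident μ π x ↔ π v = x ∨ π (μ v) = x := by
  rw [mem_incident]
  constructor
  · rintro ⟨u, hu, h⟩
    rcases (edge_eq hμ2).1 h with rfl | rfl
    · exact Or.inl hu
    · exact Or.inr hu
  · rintro (h | h)
    · exact ⟨v, h, rfl⟩
    · exact ⟨μ v, h, (edge_eq hμ2).2 (Or.inr rfl)⟩

lemma atMostTwo_incident {μ : V → V} (hμ2 : ∀ v, μ (μ v) = v) (π : V → N) :
    AtMostTwo (incident μ π) := by
  intro e x y z hx hy hz hxy
  obtain ⟨v, rfl, rfl⟩ := mem_incident.1 hx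
  rw [edge_mem_incident hμ2] at hy hz
  grind

/-- `ℓ` and `k` satisfy, at the vertices of the cycle `x`, the local form of the hypotheses of
`pathColorable_of_labels`. An `M`-edge leaving `x` must keep its colour under `m`, whereas an
`M`-edge inside `x` may be recoloured. The field `exceptional` bounds occurrences of the colour
`k v` so that labels chosen independently on all the cycles fit together. -/
structure LabelsOn (σ : Equiv.Perm V) (μ : V → V) (π : V → N) (m : Sym2 V → Fin 3) (x : N)
    (ℓ k : V → Fin 3) : Prop where
  edge : ∀ v, π v = x → k v = m s(v, μ v) ∨ π (μ v) = x
  loop : ∀ v, π v = x → π (μ v) = x → k (μ v) = k v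
  pred : ∀ v, π v = x → ℓ (σ v) = k (σ v) ∨ ℓ v = k (σ v)
  common : ∀ v, π v = x → μ v = σ v → ℓ v = k v
  surj : ∀ c, ∃ v, π v = x ∧ ℓ v = c
  exceptional : ∀ v, π v = x → ℓ v ≠ k v → 2 ≤ cnt (incident μ π) m x (k v) ∧
    ∃ z, (z = v ∨ z = σ v) ∧ k z = k v ∧ cnt (incident μ π) m (π (μ z)) (k v) ≤ 1

variable {σ : Equiv.Perm V} {μ : V → V} {π : V → N} {m : Sym2 V → Fin 3} {x : N}

/-- If the two edges of the repeated colour `a` are attached at consecutive vertices `u` and `σ u`,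
relabelling `ℓ (σ u)` with the colour absent from the cycle suffices. -/
lemma exists_labelsOn_adjacent (hσ1 : ∀ v, σ v ≠ v) (hπ : ∀ v, π (σ v) = π v)
    (hμ2 : ∀ v, μ (μ v) = v) {a b : Fin 3} (hab : a ≠ b) {u p : V} (hu : π u = x)
    (hua : m s(u, μ u) = a) (hwa : m s(σ u, μ (σ u)) = a) (hw : π (μ (σ u)) ≠ x)
    (hw1 : cnt (incident μ π) m (π (μ (σ u))) a ≤ 1) (hp : π p = x) (hpb : m s(p, μ p) = b)
    (hxa : 2 ≤ cnt (incident μ π) m x a) : ∃ ℓ k, LabelsOn σ μ π m x ℓ k := by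
  obtain ⟨c, hca, hcb⟩ := third a b
  have hkμ : ∀ v, m s(μ v, μ (μ v)) = m s(v, μ v) := fun v => by rw [hμ2, Sym2.eq_swap]
  refine ⟨Function.update (fun v => m s(v, μ v)) (σ u) c, fun v => m s(v, μ v), ?_, ?_, ?_, ?_,
    ?_, ?_⟩
  · exact fun v _ => Or.inl rfl
  · exact fun v _ _ => hkμ v
  · intro v _
    by_cases h : v = u
    · subst h; right; rw [Function.update_of_ne (hσ1 v).symm, hua, hwa]
    · left; rw [Function.update_of_ne (fun h' => h (σ.injective h'))]
  · intro v hv h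
    rw [Function.update_of_ne]
    rintro rfl
    exact hw (by rw [h, hπ, hv])
  · intro d
    rcases fin3_cases hab hca.symm hcb.symm d with rfl | rfl | rfl
    · exact ⟨u, hu, by rw [Function.update_of_ne (hσ1 u).symm, hua]⟩
    · exact ⟨p, hp, by rw [Function.update_of_ne (by rintro rfl; exact hab (hwa ▸ hpb)), hpb]⟩
    · exact ⟨σ u, by rw [hπ, hu], by simp⟩
  · intro v hv h
    by_cases hvu : v = σ u
    · subst hvu
      simp only [hwa]
      exact ⟨hxa, σ u, Or.inl rfl, hwa, hw1⟩
    · rw [Function.update_of_ne hvu] at h; exact absurd rfl h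

/-- Every cycle can be labelled once `m` is as in `exists_good_coloring`. If all three colours are
seen, both labels are the colour of the `M`-edge. Otherwise just three `M`-edges meet the cycle, two
of them, attached at `u` and `w`, having the same colour `a` and leaving the cycle. Unless `u` and
`w` are consecutive, the cycle is `u, σ u, w, σ w` with the chord `{σ u, σ w}` in `M`; the chord is
then recoloured `a`, and `σ u`, `σ w` receive the other two colours as `ℓ`. -/
lemma exists_labelsOn (hσ1 : ∀ v, σ v ≠ v) (hσ2 : ∀ v, σ (σ v) ≠ v) (hπ : ∀ v, π (σ v) = π v)
    (hμ2 : ∀ v, μ (μ v) = v)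
    (hm : (∀ c, ∃ e ∈ incident μ π x, m e = c) ∨
      ((incident μ π x).card = 3 ∧ ∃ a, cnt (incident μ π) m x a = 2 ∧
        ∀ e ∈ incident μ π x, m e = a →
          ∃ y, y ≠ x ∧ e ∈ incident μ π y ∧ cnt (incident μ π) m y a = 1)) :
    ∃ ℓ k, LabelsOn σ μ π m x ℓ k := by
  have hkμ : ∀ v, m s(μ v, μ (μ v)) = m s(v, μ v) := fun v => by rw [hμ2, Sym2.eq_swap]
  rcases hm with hm | ⟨h3, a, ha, hm⟩
  · refine ⟨fun v => m s(v, μ v), fun v => m s(v, μ v), fun v _ => Or.inl rfl,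
      fun v _ _ => hkμ v, fun v _ => Or.inl rfl, fun v _ _ => rfl, fun c => ?_,
      fun v _ h => absurd rfl h⟩
    obtain ⟨e, he, hec⟩ := hm c
    obtain ⟨v, hv, rfl⟩ := mem_incident.1 he
    exact ⟨v, hv, hec⟩
  have hout : ∀ v, π v = x → m s(v, μ v) = a →
      π (μ v) ≠ x ∧ cnt (incident μ π) m (π (μ v)) a ≤ 1 := by
    intro v hv hva
    obtain ⟨y, hy, hvy, hy1⟩ := hm _ (mem_incident.2 ⟨v, hv, rfl⟩) hva
    rcases (edge_mem_incident hμ2).1 hvy with h | h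
    · exact absurd (h.symm.trans hv) hy
    · rw [h]; exact ⟨hy, hy1.le⟩
  obtain ⟨e1, e2, he12, hs⟩ := Finset.card_eq_two.1 ha
  have hrest : ((incident μ π x).filter (fun e => ¬ m e = a)).card = 1 := by
    have := Finset.card_filter_add_card_filter_not (s := incident μ π x) (fun e => m e = a)
    unfold cnt at ha
    omega
  obtain ⟨e3, he3⟩ := Finset.card_eq_one.1 hrest
  have h1 : e1 ∈ (incident μ π x).filter (fun e => m e = a) := by rw [hs]; simp
  have h2 : e2 ∈ (incident μ π x).filter (fun e => m e = a) := by rw [hs]; simp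
  have h3 : e3 ∈ (incident μ π x).filter (fun e => ¬ m e = a) := by rw [he3]; simp
  simp only [Finset.mem_filter] at h1 h2 h3
  obtain ⟨h1, h1a⟩ := h1
  obtain ⟨h2, h2a⟩ := h2
  obtain ⟨h3, h3a⟩ := h3
  obtain ⟨u, hu, rfl⟩ := mem_incident.1 h1
  obtain ⟨w, hw, rfl⟩ := mem_incident.1 h2
  obtain ⟨t, ht, rfl⟩ := mem_incident.1 h3
  obtain ⟨hu1, hu2⟩ := hout u hu h1a
  obtain ⟨hw1, hw2⟩ := hout w hw h2a
  have huw : u ≠ w := by rintro rfl; exact he12 rfl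
  have hthird : ∀ v, π v = x → v ≠ u → v ≠ w → s(v, μ v) = s(t, μ t) := by
    intro v hv hvu hvw
    have hmem : s(v, μ v) ∈ incident μ π x := mem_incident.2 ⟨v, hv, rfl⟩
    by_cases hva : m s(v, μ v) = a
    · exfalso
      have : s(v, μ v) ∈ (incident μ π x).filter (fun e => m e = a) := by simp [hmem, hva]
      rw [hs, Finset.mem_insert, Finset.mem_singleton, edge_eq hμ2, edge_eq hμ2] at this
      rcases this with (h | rfl) | (h | rfl)
      · exact hvu h
      · exact hu1 hv
      · exact hvw h
      · exact hw1 hv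
    · have : s(v, μ v) ∈ (incident μ π x).filter (fun e => ¬ m e = a) := by simp [hmem, hva]
      rw [he3] at this
      simpa only [Finset.mem_singleton] using this
  have hrest2 : ∀ v v', π v = x → v ≠ u → v ≠ w → π v' = x → v' ≠ u → v' ≠ w →
      v = v' ∨ v = μ v' := by
    intro v v' hv hvu hvw hv' hvu' hvw'
    exact (edge_eq hμ2).1 ((hthird v hv hvu hvw).trans (hthird v' hv' hvu' hvw').symm)
  by_cases hA : w = σ u
  · subst hA
    exact exists_labelsOn_adjacent hσ1 hπ hμ2 (Ne.symm h3a) hu h1a h2a hw1 hw2 ht rfl ha.ge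
  by_cases hB : u = σ w
  · subst hB
    exact exists_labelsOn_adjacent hσ1 hπ hμ2 (Ne.symm h3a) hw h2a h1a hu1 hu2 ht rfl ha.ge
  -- from here on the cycle is `u, σ u, w, σ w` and `{σ u, σ w}` is the third edge
  have hpx : π (σ u) = x := by rw [hπ, hu]
  have hqx : π (σ w) = x := by rw [hπ, hw]
  have hpq : σ u ≠ σ w := σ.injective.ne huw
  have hq : σ w = μ (σ u) := by
    rcases hrest2 (σ w) (σ u) hqx (Ne.symm hB) (hσ1 w) hpx (hσ1 u) (Ne.symm hA) with h | h
    · exact absurd h.symm hpq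
    · exact h
  have hp : σ u = μ (σ w) := by rw [hq, hμ2]
  have hσp : σ (σ u) = w := by
    by_contra h
    rcases hrest2 (σ (σ u)) (σ u) (by rw [hπ, hpx]) (hσ2 u) h hpx (hσ1 u) (Ne.symm hA) with h' | h'
    · exact hσ1 _ h'
    · rw [← hq] at h'; exact hA (σ.injective h').symm
  have hσq : σ (σ w) = u := by
    by_contra h
    rcases hrest2 (σ (σ w)) (σ w) (by rw [hπ, hqx]) h (hσ2 w) hqx (Ne.symm hB) (hσ1 w) with h' | h'
    · exact hσ1 _ h'
    · rw [← hp] at h'; exact hB (σ.injective h').symm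
  have hall : ∀ v, π v = x → v = u ∨ v = w ∨ v = σ u ∨ v = σ w := by
    intro v hv
    by_cases hvu : v = u
    · exact Or.inl hvu
    by_cases hvw : v = w
    · exact Or.inr (Or.inl hvw)
    rcases hrest2 v (σ u) hv hvu hvw hpx (hσ1 u) (Ne.symm hA) with h | h
    · exact Or.inr (Or.inr (Or.inl h))
    · exact Or.inr (Or.inr (Or.inr (h.trans hq.symm)))
  obtain ⟨b, hba, -⟩ := third a a
  obtain ⟨c, hca, hcb⟩ := third a b
  set ℓ : V → Fin 3 := fun v => if v = σ u then b else if v = σ w then c else a with hℓ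
  have ℓp : ℓ (σ u) = b := by simp [hℓ]
  have ℓq : ℓ (σ w) = c := by simp only [hℓ]; rw [if_neg hpq.symm, if_true]
  have ℓu : ℓ u = a := by simp only [hℓ]; rw [if_neg (hσ1 u).symm, if_neg hB]
  have ℓw : ℓ w = a := by simp only [hℓ]; rw [if_neg hA, if_neg (hσ1 w).symm]
  refine ⟨ℓ, fun _ => a, ?_, fun v _ _ => rfl, ?_, ?_, ?_, ?_⟩
  · intro v hv
    rcases hall v hv with h | h | h | h
    · subst h; exact Or.inl h1a.symm
    · subst h; exact Or.inl h2a.symm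
    · right; rw [h, ← hq]; exact hqx
    · right; rw [h, ← hp]; exact hpx
  · intro v hv
    rcases hall v hv with h | h | h | h
    · rw [h]; exact Or.inr ℓu
    · rw [h]; exact Or.inr ℓw
    · left; rw [h, hσp]; exact ℓw
    · left; rw [h, hσq]; exact ℓu
  · intro v hv hμv
    rcases hall v hv with h | h | h | h
    · rw [h]; exact ℓu
    · rw [h]; exact ℓw
    · rw [h, ← hq, hσp] at hμv; exact absurd hμv (hσ1 w)
    · rw [h, ← hp, hσq] at hμv; exact absurd hμv (hσ1 u)
  · intro d
    rcases fin3_cases hba.symm hca.symm hcb.symm d with hd | hd | hd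
    · exact ⟨u, hu, hd ▸ ℓu⟩
    · exact ⟨_, hpx, hd ▸ ℓp⟩
    · exact ⟨_, hqx, hd ▸ ℓq⟩
  · intro v hv hne
    refine ⟨ha.ge, ?_⟩
    rcases hall v hv with h | h | h | h
    · rw [h] at hne; exact absurd ℓu hne
    · rw [h] at hne; exact absurd ℓw hne
    · exact ⟨_, Or.inr rfl, rfl, by rw [h, hσp]; exact hw2⟩
    · exact ⟨_, Or.inr rfl, rfl, by rw [h, hσq]; exact hu2⟩

omit [Fintype V] [DecidableEq V] in
/-- Four vertices such that every three of them contain a matched pair are covered by two edges of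
the matching. -/
lemma exists_two_edges_of_four {M : Finset (Sym2 V)}
    (hM : ∀ u w, u = μ w → s(u, w) ∈ M) {a b c d : V} (hab : a ≠ b) (hac : a ≠ c) (had : a ≠ d)
    (hbc : b ≠ c)
    (q1 : a = μ b ∨ a = μ c ∨ b = μ c) (q2 : a = μ b ∨ a = μ d ∨ b = μ d)
    (q3 : a = μ c ∨ a = μ d ∨ c = μ d) (q4 : b = μ c ∨ b = μ d ∨ c = μ d) :
    ∃ e₁ ∈ M, ∃ e₂ ∈ M, e₁ ≠ e₂ ∧ (∀ z ∈ e₁, z = a ∨ z = b ∨ z = c ∨ z = d) ∧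
      (∀ z ∈ e₂, z = a ∨ z = b ∨ z = c ∨ z = d) := by
  have hcase : (a = μ b ∧ c = μ d) ∨ (a = μ c ∧ b = μ d) ∨ (a = μ d ∧ b = μ c) := by
    grind
  rcases hcase with ⟨h, h'⟩ | ⟨h, h'⟩ | ⟨h, h'⟩
  · refine ⟨_, hM _ _ h, _, hM _ _ h', by simp [hac, had], ?_, ?_⟩ <;> intro z hz <;>
      rcases Sym2.mem_iff.1 hz with hz | hz <;> simp [hz]
  · refine ⟨_, hM _ _ h, _, hM _ _ h', by simp [hab, had], ?_, ?_⟩ <;> intro z hz <;>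
      rcases Sym2.mem_iff.1 hz with hz | hz <;> simp [hz]
  · refine ⟨_, hM _ _ h, _, hM _ _ h', by simp [hab, hac], ?_, ?_⟩ <;> intro z hz <;>
      rcases Sym2.mem_iff.1 hz with hz | hz <;> simp [hz]

/-- The only place where kites matter: a cycle met by at most two `M`-edges has at most four
vertices, and it carries a 3-kite or a 4-kite. -/
lemma three_le_card_incident {C M : Finset (Sym2 V)} (hσ1 : ∀ v, σ v ≠ v)
    (hσ2 : ∀ v, σ (σ v) ≠ v) (hC : ∀ e, e ∈ C ↔ ∃ v, e = s(v, σ v))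
    (hμ2 : ∀ v, μ (μ v) = v) (hM : ∀ e, e ∈ M ↔ ∃ v, e = s(v, μ v))
    (hπ : ∀ v, π (σ v) = π v)
    (h3 : ∀ x y z : V, ¬ IsThreeKite C M x y z)
    (h4 : ∀ x y z t : V, ¬ IsFourKite C M x y z t) (v : V) :
    3 ≤ (incident μ π (π v)).card := by
  have hCσ : ∀ u, s(u, σ u) ∈ C := fun u => (hC _).2 ⟨u, rfl⟩
  have hMμ : ∀ u w, u = μ w → s(u, w) ∈ M := fun u w h => (hM _).2 ⟨w, by rw [h, Sym2.eq_swap]⟩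
  have hmem : ∀ u, π u = π v → s(u, μ u) ∈ incident μ π (π v) :=
    fun u hu => mem_incident.2 ⟨u, hu, rfl⟩
  have p1 : π (σ v) = π v := hπ v
  have p2 : π (σ (σ v)) = π v := by rw [hπ, p1]
  have p3 : π (σ (σ (σ v))) = π v := by rw [hπ, p2]
  have p4 : π (σ (σ (σ (σ v)))) = π v := by rw [hπ, p3]
  by_contra hlt
  -- any three vertices of the cycle contain a pair matched by `M`
  have hthree : ∀ a b c, π a = π v → π b = π v → π c = π v → a ≠ b → a ≠ c → b ≠ c →
      a = μ b ∨ a = μ c ∨ b = μ c := by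
    intro a b c ha hb hc hab hac hbc
    by_contra h
    push Not at h
    refine hlt ?_
    rw [← Finset.card_eq_three.2 ⟨s(a, μ a), s(b, μ b), s(c, μ c), ?_, ?_, ?_, rfl⟩]
    · apply Finset.card_le_card
      intro e
      simp only [Finset.mem_insert, Finset.mem_singleton]
      rintro (rfl | rfl | rfl)
      · exact hmem a ha
      · exact hmem b hb
      · exact hmem c hc
    · rw [Ne, edge_eq hμ2]; tauto
    · rw [Ne, edge_eq hμ2]; tauto
    · rw [Ne, edge_eq hμ2]; tauto
  have n01 := (hσ1 v).symm
  have n02 := (hσ2 v).symm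
  have n12 := (hσ1 (σ v)).symm
  have n13 := (hσ2 (σ v)).symm
  have n23 := (hσ1 (σ (σ v))).symm
  have q1 := hthree v (σ v) (σ (σ v)) rfl p1 p2 n01 n02 n12
  by_cases t3 : σ (σ (σ v)) = v
  · have hc : s(v, σ (σ v)) ∈ C := by
      have := hCσ (σ (σ v)); rw [t3, Sym2.eq_swap] at this; exact this
    refine h3 v (σ v) (σ (σ v)) ⟨n01, n02, n12, hCσ _, hCσ _, hc, ?_⟩
    rcases q1 with h | h | h
    · exact Or.inl (hMμ _ _ h)
    · exact Or.inr (Or.inr (hMμ _ _ h))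
    · exact Or.inr (Or.inl (hMμ _ _ h))
  have n03 := Ne.symm t3
  by_cases t4 : σ (σ (σ (σ v))) = v
  · have q2 := hthree v (σ v) (σ (σ (σ v))) rfl p1 p3 n01 n03 n13
    have q3 := hthree v (σ (σ v)) (σ (σ (σ v))) rfl p2 p3 n02 n03 n23
    have q4 := hthree (σ v) (σ (σ v)) (σ (σ (σ v))) p1 p2 p3 n12 n13 n23
    have hM2 := exists_two_edges_of_four hMμ n01 n02 n03 n12 q1 q2 q3 q4
    refine h4 v (σ v) (σ (σ v)) (σ (σ (σ v))) ⟨?_, hCσ _, hCσ _, hCσ _, ?_, hM2⟩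
    · simp [n01, n02, n03, n12, n13, n23]
    · have := hCσ (σ (σ (σ v))); rwa [t4] at this
  · -- five distinct vertices of the cycle, at most two of them on each `M`-edge
    have n14 : σ v ≠ σ (σ (σ (σ v))) := fun h => t3 (σ.injective h).symm
    have n24 := (hσ2 (σ (σ v))).symm
    have n34 := (hσ1 (σ (σ (σ v)))).symm
    have hcard : ({v, σ v, σ (σ v), σ (σ (σ v)), σ (σ (σ (σ v)))} : Finset V).card = 5 := by
      have n04 := Ne.symm t4
      rw [Finset.card_insert_of_notMem, Finset.card_insert_of_notMem,
        Finset.card_insert_of_notMem, Finset.card_pair n34] <;>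
      simp only [Finset.mem_insert, Finset.mem_singleton, not_or]
      exacts [⟨n23, n24⟩, ⟨n12, n13, n14⟩, ⟨n01, n02, n03, n04⟩]
    have := Finset.card_le_mul_card_image_of_maps_to
      (s := ({v, σ v, σ (σ v), σ (σ (σ v)), σ (σ (σ (σ v)))} : Finset V))
      (t := incident μ π (π v)) (f := fun u => s(u, μ u)) (n := 2) ?_ ?_
    · omega
    · intro u hu
      apply hmem
      simp only [Finset.mem_insert, Finset.mem_singleton] at hu
      rcases hu with rfl | rfl | rfl | rfl | rfl
      exacts [rfl, p1, p2, p3, p4]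
    · intro e he
      obtain ⟨u, -, rfl⟩ := mem_incident.1 he
      refine (Finset.card_le_card (t := {u, μ u}) ?_).trans Finset.card_le_two
      intro w hw
      simpa using (edge_eq hμ2).1 (Finset.mem_filter.1 hw).2

end Labels

/-! ### Assembling the labels -/

/-- If the cycle cover `C` contains no 3-kite and no 4-kite with respect to the
perfect matching `M`, then the multigraph consisting of two copies of every edge
of `C` and one copy of every edge of `M` is path-3-colorable. -/
theorem no_kites_implies_path_three_colorable
    {V : Type*} [Fintype V] [DecidableEq V] (n : ℕ)
    (hcard : Fintype.card V = n) (hn : 4 ≤ n) (heven : Even n)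
    (C M : Finset (Sym2 V))
    (hC : IsCycleCoverEdges C) (hM : IsPerfectMatchingEdges M)
    (h3 : ∀ x y z : V, ¬ IsThreeKite C M x y z)
    (h4 : ∀ x y z t : V, ¬ IsFourKite C M x y z t) :
    PathColorable 3 (fun e =>
      (if e ∈ C then 2 else 0) + (if e ∈ M then 1 else 0)) := by
  classical
  obtain ⟨σ, hσ1, hσ2, hCσ⟩ := exists_successor hC
  obtain ⟨μ, hμ1, hμ2, hMμ⟩ := exists_mate hM
  let π : V → Quotient (Equiv.Perm.SameCycle.setoid σ) := fun v => Quotient.mk _ v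
  have hπ : ∀ v w, π v = π w ↔ σ.SameCycle v w := fun v w => Quotient.eq
  have hπσ : ∀ v, π (σ v) = π v := fun v =>
    (hπ _ _).2 (Equiv.Perm.sameCycle_apply_left.2 (Equiv.Perm.SameCycle.refl _ _))
  have hdeg : ∀ x, 3 ≤ (incident μ π x).card := by
    intro x
    obtain ⟨v, rfl⟩ := Quotient.exists_rep x
    exact three_le_card_incident hσ1 hσ2 hCσ hμ2 hMμ hπσ h3 h4 v
  obtain ⟨m, hm⟩ := exists_good_coloring (atMostTwo_incident hμ2 π) hdeg
  choose L K hLK using fun x => exists_labelsOn (x := x) (m := m) hσ1 hσ2 hπσ hμ2 (hm x)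
  refine pathColorable_of_labels (ℓ := fun v => L (π v) v) (k := fun v => K (π v) v)
    hσ1 hσ2 hCσ hμ1 hμ2 hMμ ?_ ?_ ?_ ?_ ?_
  · intro v
    by_cases h : π (μ v) = π v
    · simp only [h]; exact (hLK (π v)).loop v rfl h
    · rw [((hLK (π v)).edge v rfl).resolve_right h,
        ((hLK (π (μ v))).edge (μ v) rfl).resolve_right (by rw [hμ2]; exact Ne.symm h), hμ2,
        Sym2.eq_swap]
  · intro v
    simp only [hπσ]
    exact (hLK (π v)).pred v rfl
  · exact fun v h => (hLK (π v)).common v rfl h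
  · intro v c
    obtain ⟨u, hu, huc⟩ := (hLK (π v)).surj c
    exact ⟨u, (hπ _ _).1 hu.symm, by simp only [hu]; exact huc⟩
  · intro r hr
    obtain ⟨-, z, hz, hkz, hcz⟩ := (hLK (π r)).exceptional r rfl hr
    have hzr : π z = π r := by
      rcases hz with rfl | rfl
      · rfl
      · exact hπσ r
    refine ⟨z, hz, by simp only [hzr]; exact hkz, fun r' hs hk' => ?_⟩
    by_contra hl
    -- the colour `k r` would occur twice on the cycle of `μ z`, where it occurs at most once
    have h5 := ((hLK (π r')).exceptional r' rfl (fun h => hl h)).1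
    rw [hk', ← (hπ _ _).2 hs] at h5
    omega
end
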